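/- Let n ≥ 1, let α_1, …, α_n be nonzero algebraic complex numbers, and let λ_1, …, λ_n be complex numbers with e^{λ_j} = α_j for each j. Assume λ_1, …, λ_n are linearly independent over ℚ. Then the numbers 1, λ_1, …, λ_n are linearly independent over the field of algebraic numbers; that is, there are no algebraic numbers β_0, β_1, …, β_n, not all zero, with β_0 + β_1 λ_1 + ⋯ + β_n λ_n = 0. -/

import Mathlib

/-!
Clear denominators in a relation `β₀ + ∑ k, β k * λ k = 0` and let `K` be a Galois number field of
degree `d` containing `β₀`, the `β k` and the `exp (λ k)`. For `σ ∈ Gal(K/ℚ)` put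
`Λ σ = ∑ k, σ (β k) * λ k` and factor `Λ σ = ε σ * μ σ` with `ε σ` an algebraic integer and
`μ σ ≠ 0`; since `Λ 1 = -β₀` is algebraic, `μ 1 = 1` is possible. For an integral basis `κ` of `K`,
the points `y j = (μ σ * σ (κ j))_σ` form a basis of `ℂ ^ d`, and the algebraic frequencies
`x i = (ε σ * σ (κ i))_σ` satisfy `⟨x i, y j⟩ = ∑ k, Tr (κ i * κ j * β k) * λ k`, whose exponential
lies in `K`. Hence the `d + 1` functions `z 1` and `exp ⟨x i, z⟩` of `d` variables, along with all
their coordinate derivatives, take values in `K` on the lattice spanned by the `y j`.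

This is one function too many, by the Schneider-Lang method on Cartesian products: Siegel's lemma
gives a polynomial in these functions vanishing to high order at the points `∑ j, s j • y j` with
`0 ≤ s j ≤ S`. Take a nonzero derivative of minimal order at one of these points. Expand it in the
directions `y j`: by pigeonhole each term differentiates many times along a single `y j`, so the
Schwarz lemma in one variable, on the complex line in that direction, makes it small. This
contradicts the lower bound given by the norm of a nonzero algebraic integer.
-/

namespace Baker

/-! ### Zeros of entire functions and the Schwarz lemma -/

section Schwarz

variable {f : ℂ → ℂ}

lemma exists_eq_pow_mul_of_le_analyticOrderAt (hf : Differentiable ℂ f) {k : ℕ} {s : ℂ}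
    (hk : (k : ℕ∞) ≤ analyticOrderAt f s) :
    ∃ g : ℂ → ℂ, Differentiable ℂ g ∧ ∀ z, f z = (z - s) ^ k * g z := by
  induction k generalizing f with
  | zero => exact ⟨f, hf, by simp⟩
  | succ k ih =>
    have hfs : f s = 0 := by
      simpa using (natCast_le_analyticOrderAt_iff_iteratedDeriv_eq_zero (hf.analyticAt s)).1 hk
        0 k.succ_pos
    have hslope : Differentiable ℂ (dslope f s) :=
      differentiableOn_univ.1 <|
        (Complex.differentiableOn_dslope Filter.univ_mem).2 hf.differentiableOn
    have hmul : f = (fun z ↦ z - s) * dslope f s := by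
      funext z
      simpa [hfs] using (sub_smul_dslope f s z).symm
    have hsub : AnalyticAt ℂ (fun z : ℂ ↦ z - s) s := by fun_prop
    have horder : analyticOrderAt (fun z : ℂ ↦ z - s) s = 1 :=
      (hsub.analyticOrderAt_eq_natCast (n := 1)).2
        ⟨fun _ ↦ 1, analyticAt_const, one_ne_zero, by simp⟩
    rw [hmul, analyticOrderAt_mul hsub (hslope.analyticAt s), horder, Nat.cast_succ, add_comm,
      ENat.add_le_add_iff_left ENat.one_ne_top] at hk
    obtain ⟨g, hg, hfg⟩ := ih hslope hk
    refine ⟨g, hg, fun z ↦ ?_⟩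
    rw [congrFun hmul z, Pi.mul_apply, hfg, pow_succ', mul_assoc]

lemma exists_eq_prod_pow_mul_of_le_analyticOrderAt (hf : Differentiable ℂ f) {k : ℕ}
    {P : Finset ℂ} (hP : ∀ s ∈ P, (k : ℕ∞) ≤ analyticOrderAt f s) :
    ∃ g : ℂ → ℂ, Differentiable ℂ g ∧ ∀ z, f z = (∏ s ∈ P, (z - s) ^ k) * g z := by
  classical
  induction P using Finset.induction_on with
  | empty => exact ⟨f, hf, by simp⟩
  | insert a P ha ih =>
    obtain ⟨g, hg, hfg⟩ := ih fun s hs ↦ hP s (Finset.mem_insert_of_mem hs)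
    have hprod : AnalyticAt ℂ (fun z : ℂ ↦ ∏ s ∈ P, (z - s) ^ k) a := by fun_prop
    have horder : analyticOrderAt (fun z : ℂ ↦ ∏ s ∈ P, (z - s) ^ k) a = 0 := by
      rw [hprod.analyticOrderAt_eq_zero]
      refine Finset.prod_ne_zero_iff.2 fun s hs ↦ pow_ne_zero _ (sub_ne_zero.2 ?_)
      exact (ne_of_mem_of_not_mem hs ha).symm
    have hga := hP a (Finset.mem_insert_self _ _)
    rw [show f = (fun z : ℂ ↦ ∏ s ∈ P, (z - s) ^ k) * g from funext hfg,
      analyticOrderAt_mul hprod (hg.analyticAt a), horder, zero_add] at hga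
    obtain ⟨g', hg', hgg'⟩ := exists_eq_pow_mul_of_le_analyticOrderAt hg hga
    refine ⟨g', hg', fun z ↦ ?_⟩
    rw [hfg, hgg', Finset.prod_insert ha]
    ring

lemma norm_le_of_forall_le_analyticOrderAt (hf : Differentiable ℂ f) {k : ℕ} {P : Finset ℂ}
    (hP : ∀ s ∈ P, (k : ℕ∞) ≤ analyticOrderAt f s) {ρ r R M : ℝ} (hρ : ∀ s ∈ P, ‖s‖ ≤ ρ)
    (hρ₀ : 0 ≤ ρ) (hρR : ρ < R) (hrR : r ≤ R) (hM : ∀ z, ‖z‖ ≤ R → ‖f z‖ ≤ M) {z : ℂ}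
    (hz : ‖z‖ ≤ r) : ‖f z‖ ≤ ((r + ρ) / (R - ρ)) ^ (k * P.card) * M := by
  obtain ⟨g, hg, hfg⟩ := exists_eq_prod_pow_mul_of_le_analyticOrderAt hf hP
  have hR : R ≠ 0 := (hρ₀.trans_lt hρR).ne'
  have hRρ : 0 < R - ρ := sub_pos.2 hρR
  have hr : 0 ≤ r := (norm_nonneg z).trans hz
  have hg_le : ‖g z‖ ≤ M / (R - ρ) ^ (k * P.card) := by
    refine Complex.norm_le_of_forall_mem_frontier_norm_le (U := Metric.ball 0 R)
      Metric.isBounded_ball hg.diffContOnCl (fun w hw ↦ ?_)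
      (by simpa [closure_ball _ hR] using hz.trans hrR)
    have hw : ‖w‖ = R := by simpa [frontier_ball _ hR] using hw
    have hprod : (R - ρ) ^ (k * P.card) ≤ ‖∏ s ∈ P, (w - s) ^ k‖ := by
      rw [norm_prod, pow_mul, ← Finset.prod_const]
      refine Finset.prod_le_prod (fun _ _ ↦ pow_nonneg hRρ.le k) fun s hs ↦ ?_
      rw [norm_pow]
      gcongr
      linarith [norm_sub_norm_le w s, hρ s hs]
    rw [le_div_iff₀ (pow_pos hRρ _), mul_comm]
    calc (R - ρ) ^ (k * P.card) * ‖g w‖ ≤ ‖∏ s ∈ P, (w - s) ^ k‖ * ‖g w‖ := by gcongr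
      _ = ‖f w‖ := by rw [hfg, norm_mul]
      _ ≤ M := hM w hw.le
  have hprod : ‖∏ s ∈ P, (z - s) ^ k‖ ≤ (r + ρ) ^ (k * P.card) := by
    rw [norm_prod, pow_mul, ← Finset.prod_const]
    refine Finset.prod_le_prod (fun _ _ ↦ norm_nonneg _) fun s hs ↦ ?_
    rw [norm_pow]
    gcongr
    linarith [norm_sub_le z s, hρ s hs]
  calc ‖f z‖ = ‖∏ s ∈ P, (z - s) ^ k‖ * ‖g z‖ := by rw [hfg, norm_mul]
    _ ≤ (r + ρ) ^ (k * P.card) * (M / (R - ρ) ^ (k * P.card)) := by gcongr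
    _ = ((r + ρ) / (R - ρ)) ^ (k * P.card) * M := by rw [div_pow]; ring

lemma norm_iteratedDeriv_natCast_le (hf : Differentiable ℂ f) {S k : ℕ} {R M : ℝ}
    (hSR : 2 * S ≤ R) (hzero : ∀ s < S, ∀ i < k, iteratedDeriv i f s = 0)
    (hM : ∀ z, ‖z‖ ≤ R → ‖f z‖ ≤ M) {s : ℕ} (hs : s < S) :
    ‖iteratedDeriv k f s‖ ≤ k.factorial * ((4 * S / R) ^ (S * k) * M) := by
  have hsS : (s : ℝ) + 1 ≤ S := by exact_mod_cast hs
  have hR : 0 < R := by linarith [(s.cast_nonneg : (0 : ℝ) ≤ s)]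
  have hM₀ : 0 ≤ M := (norm_nonneg _).trans (hM 0 (by simpa using hR.le))
  let P : Finset ℂ := (Finset.range S).map Nat.castEmbedding
  have hP_order : ∀ t ∈ P, (k : ℕ∞) ≤ analyticOrderAt f t := by
    simpa [P, natCast_le_analyticOrderAt_iff_iteratedDeriv_eq_zero (hf.analyticAt _)] using hzero
  have hP_norm : ∀ t ∈ P, ‖t‖ ≤ S := by
    simpa [P] using fun t ht ↦ le_of_lt ht
  have hsphere : ∀ z ∈ Metric.sphere (s : ℂ) 1, ‖f z‖ ≤ (4 * S / R) ^ (S * k) * M := by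
    intro z hz
    have hzS : ‖z‖ ≤ S := by
      have hle := norm_le_norm_add_norm_sub' z (s : ℂ)
      rw [mem_sphere_iff_norm.1 hz, Complex.norm_natCast] at hle
      linarith
    calc ‖f z‖ ≤ ((S + S) / (R - S)) ^ (k * P.card) * M :=
          norm_le_of_forall_le_analyticOrderAt hf hP_order hP_norm S.cast_nonneg (by linarith)
            (by linarith) hM hzS
      _ = ((S + S) / (R - S)) ^ (S * k) * M := by
          rw [Finset.card_map, Finset.card_range, mul_comm k]
      _ ≤ (4 * S / R) ^ (S * k) * M := by
          have : 0 < R - S := by linarith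
          gcongr ?_ ^ _ * M
          rw [div_le_div_iff₀ this hR]
          nlinarith
  simpa using Complex.norm_iteratedDeriv_le_of_forall_mem_sphere_norm_le k one_pos
    hf.diffContOnCl hsphere

end Schwarz

/-! ### Exponential polynomials -/

open Polynomial

section ExponentialPolynomials

variable {R R' B τ : Type*} [CommRing R] [CommRing R'] [Fintype τ]

/-- The directional derivative `∂_u` on exponential polynomials in a vector variable `z`: the
family `P : B → R[X]` encodes `∑ b, P b (m ⬝ᵥ z) * exp (w b ⬝ᵥ z)`, with frequencies `w` and a
single linear form `m`. -/
noncomputable def dirDeriv (w : B → τ → R) (m : τ → R) :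
    (τ → R) →ₗ[R] Module.End R (B → R[X]) :=
  LinearMap.mk₂ R (fun u P b ↦ (w b ⬝ᵥ u) • P b + (m ⬝ᵥ u) • derivative (P b))
    (fun u u' P ↦ funext fun b ↦ by simp only [dotProduct_add, add_smul, Pi.add_apply]; abel)
    (fun c u P ↦ funext fun b ↦ by simp [mul_smul])
    (fun u P Q ↦ funext fun b ↦ by simp only [Pi.add_apply, smul_add, derivative_add]; abel)
    (fun c u P ↦ funext fun b ↦ by simp [smul_comm c])

/-- The value of the exponential polynomial encoded by `P` at a point where its linear form takes
the value `r` and its exponentials take the values `e b`. -/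
noncomputable def evalAt [Fintype B] (r : R) (e : B → R) : (B → R[X]) →ₗ[R] R :=
  ∑ b, e b • leval r ∘ₗ LinearMap.proj b

variable (w : B → τ → R) (m : τ → R)

lemma dirDeriv_apply (u : τ → R) (P : B → R[X]) (b : B) :
    dirDeriv w m u P b = (w b ⬝ᵥ u) • P b + (m ⬝ᵥ u) • derivative (P b) :=
  rfl

lemma evalAt_apply [Fintype B] (r : R) (e : B → R) (P : B → R[X]) :
    evalAt r e P = ∑ b, (P b).eval r * e b := by
  simp [evalAt, mul_comm]

lemma commute_dirDeriv (u v : τ → R) : Commute (dirDeriv w m u) (dirDeriv w m v) := by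
  refine LinearMap.ext fun P ↦ funext fun b ↦ ?_
  simp only [Module.End.mul_apply, dirDeriv_apply, derivative_add, derivative_smul, smul_add,
    smul_smul, mul_comm]
  abel

lemma prod_map_dirDeriv_eq_of_perm {us vs : List (τ → R)} (h : us.Perm vs) :
    (us.map (dirDeriv w m)).prod = (vs.map (dirDeriv w m)).prod :=
  (h.map _).prod_eq' <| List.pairwise_map.2 <| List.pairwise_of_forall fun u v ↦
    commute_dirDeriv w m u v

lemma map_evalAt [Fintype B] (ψ : R →+* R') (r : R) (e : B → R) (P : B → R[X]) :
    ψ (evalAt r e P) = evalAt (ψ r) (ψ ∘ e) fun b ↦ (P b).map ψ := by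
  simp [evalAt_apply, eval_map, eval₂_at_apply]

lemma map_dirDeriv (ψ : R →+* R') (u : τ → R) (P : B → R[X]) :
    (fun b ↦ (dirDeriv w m u P b).map ψ) =
      dirDeriv (fun b ↦ ψ ∘ w b) (ψ ∘ m) (ψ ∘ u) fun b ↦ (P b).map ψ := by
  funext b
  simp [dirDeriv_apply, derivative_map, Polynomial.map_smul, RingHom.map_dotProduct]

lemma map_prod_dirDeriv (ψ : R →+* R') (us : List (τ → R)) (P : B → R[X]) :
    (fun b ↦ ((us.map (dirDeriv w m)).prod P b).map ψ) =
      (us.map fun u ↦ dirDeriv (fun b ↦ ψ ∘ w b) (ψ ∘ m) (ψ ∘ u)).prod fun b ↦ (P b).map ψ := by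
  induction us with
  | nil => rfl
  | cons u us ih =>
    simp only [List.map_cons, List.prod_cons, Module.End.mul_apply, map_dirDeriv, ih]

end ExponentialPolynomials

section ListProducts

lemma apply_prod_eq_zero_of_basis {R V E κ : Type*} [CommSemiring R] [AddCommMonoid V] [Module R V]
    [AddCommMonoid E] [Module R E] (A : V →ₗ[R] Module.End R E) (y : Module.Basis κ R V)
    (f : E →ₗ[R] R) {us : List V} {p : E}
    (hf : ∀ js : List κ, js.length = us.length → f ((js.map fun j ↦ A (y j)).prod p) = 0) :
    f ((us.map A).prod p) = 0 := by
  induction us generalizing f with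
  | nil => simpa using hf [] rfl
  | cons u us ih =>
    have hzero : f ∘ₗ A.flip ((us.map A).prod p) = 0 := y.ext fun j ↦ by
      refine ih (f ∘ₗ A (y j)) fun js hjs ↦ ?_
      simpa using hf (j :: js) (by simp [hjs])
    simpa using LinearMap.congr_fun hzero u

variable {𝕜 V E κ : Type*} [NormedField 𝕜] [AddCommGroup V] [Module 𝕜 V] [AddCommGroup E]
  [Module 𝕜 E] [Fintype κ] (A : V →ₗ[𝕜] Module.End 𝕜 E) (y : Module.Basis κ 𝕜 V) (f : E →ₗ[𝕜] 𝕜)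

lemma norm_apply_prod_le_of_basis {C ε : ℝ} (hC : 0 ≤ C) (hε : 0 ≤ ε) {us : List V}
    (hus : ∀ u ∈ us, ∑ j, ‖y.repr u j‖ ≤ C) {p : E}
    (hf : ∀ js : List κ, js.length = us.length → ‖f ((js.map fun j ↦ A (y j)).prod p)‖ ≤ ε) :
    ‖f ((us.map A).prod p)‖ ≤ C ^ us.length * ε := by
  induction us generalizing f with
  | nil => simpa using hf [] rfl
  | cons u us ih =>
    rw [List.map_cons, List.prod_cons, Module.End.mul_apply, ← y.sum_repr u]
    simp only [map_sum, map_smul, LinearMap.sum_apply, LinearMap.smul_apply]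
    calc ‖∑ j, y.repr u j • f (A (y j) ((us.map A).prod p))‖
        ≤ ∑ j, ‖y.repr u j‖ * (C ^ us.length * ε) := by
          refine norm_sum_le_of_le _ fun j _ ↦ ?_
          rw [norm_smul]
          gcongr
          refine ih (f ∘ₗ A (y j)) (fun u' hu' ↦ hus u' (List.mem_cons_of_mem u hu'))
            fun js hjs ↦ ?_
          simpa using hf (j :: js) (by simp [hjs])
      _ = (∑ j, ‖y.repr u j‖) * (C ^ us.length * ε) := by rw [Finset.sum_mul]
      _ ≤ C * (C ^ us.length * ε) := by
          gcongr
          exact hus u List.mem_cons_self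
      _ = C ^ (u :: us).length * ε := by rw [List.length_cons, pow_succ']; ring

end ListProducts

section Nonvanishing

variable {F B τ : Type*} [Field F] [Fintype τ] {w : B → τ → F} {m v : τ → F}

lemma eq_and_derivative_eq_zero_of_dirDeriv_eq_smul (hm : m ⬝ᵥ v ≠ 0) {P : B → F[X]} {a : F}
    (hP : dirDeriv w m v P = a • P) {b : B} (hb : P b ≠ 0) :
    w b ⬝ᵥ v = a ∧ derivative (P b) = 0 := by
  have hPb : (w b ⬝ᵥ v) • P b + (m ⬝ᵥ v) • derivative (P b) = a • P b := congrFun hP b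
  have ha : w b ⬝ᵥ v = a := by
    have hlead := congrArg (fun p ↦ p.coeff (P b).natDegree) hPb
    simp only [coeff_add, coeff_smul, coeff_derivative,
      coeff_eq_zero_of_natDegree_lt (P b).natDegree.lt_succ_self, zero_mul, smul_eq_mul,
      mul_zero, add_zero] at hlead
    exact mul_right_cancel₀ (leadingCoeff_ne_zero.2 hb) hlead
  refine ⟨ha, ?_⟩
  simpa [ha, hm] using hPb

lemma evalAt_ne_zero_of_dirDeriv_eq_smul [CharZero F] [Fintype B]
    (hw : Function.Injective fun b ↦ w b ⬝ᵥ v) (hm : m ⬝ᵥ v ≠ 0) {r : F} {e : B → F}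
    (he : ∀ b, e b ≠ 0) {P : B → F[X]} (hP₀ : P ≠ 0) {a : F} (hP : dirDeriv w m v P = a • P) :
    evalAt r e P ≠ 0 := by
  obtain ⟨b, hb⟩ := Function.ne_iff.1 hP₀
  have hsingle : ∀ b', b' ≠ b → P b' = 0 := by
    intro b' hne
    by_contra hb'
    exact hne <| hw <| (eq_and_derivative_eq_zero_of_dirDeriv_eq_smul hm hP hb').1.trans
      (eq_and_derivative_eq_zero_of_dirDeriv_eq_smul hm hP hb).1.symm
  obtain ⟨c, hc⟩ := natDegree_eq_zero.1 <| derivative_eq_zero.1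
    (eq_and_derivative_eq_zero_of_dirDeriv_eq_smul hm hP hb).2
  have hc₀ : c ≠ 0 := by
    rintro rfl
    exact hb (by simpa using hc.symm)
  rw [evalAt_apply, Finset.sum_eq_single b (fun b' _ hne ↦ by simp [hsingle b' hne]) (by simp),
    ← hc, eval_C]
  exact mul_ne_zero hc₀ (he b)

lemma dirDeriv_mem_degreeLT {N : ℕ} {P : B → F[X]} (hP : ∀ b, P b ∈ degreeLT F N) (u : τ → F)
    (b : B) : dirDeriv w m u P b ∈ degreeLT F N := by
  refine Submodule.add_mem _ (Submodule.smul_mem _ _ (hP b)) (Submodule.smul_mem _ _ ?_)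
  exact mem_degreeLT.2 ((degree_derivative_le).trans_lt (mem_degreeLT.1 (hP b)))

/- An exponential polynomial all of whose derivatives along `v` vanish at a point lies in a finite
dimensional space stable under `∂_v`, and an eigenvector of `∂_v` is a single exponential. -/
lemma exists_evalAt_dirDeriv_pow_ne_zero [IsAlgClosed F] [CharZero F] [Fintype B]
    (hw : Function.Injective fun b ↦ w b ⬝ᵥ v) (hm : m ⬝ᵥ v ≠ 0) (r : F) {e : B → F}
    (he : ∀ b, e b ≠ 0) {P : B → F[X]} (hP : P ≠ 0) :
    ∃ n : ℕ, evalAt r e ((dirDeriv w m v ^ n) P) ≠ 0 := by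
  by_contra! hzero
  set D := dirDeriv w m v
  set N := Finset.univ.sup fun b ↦ (P b).natDegree + 1
  have hPN (b : B) : P b ∈ degreeLT F N :=
    mem_degreeLT.2 <| (degree_le_natDegree).trans_lt <| by
      exact_mod_cast Finset.le_sup (f := fun b ↦ (P b).natDegree + 1) (Finset.mem_univ b)
  have : Module.Finite F (degreeLT F N) := Module.Finite.equiv (degreeLTEquiv F N).symm
  let V : Submodule F (B → F[X]) :=
    LinearMap.range ((degreeLT F N).subtype.compLeft B) ⊓
      ⨅ n : ℕ, LinearMap.ker (evalAt r e ∘ₗ (D ^ n))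
  have hmem (Q : B → F[X]) :
      Q ∈ V ↔ (∀ b, Q b ∈ degreeLT F N) ∧ ∀ n : ℕ, evalAt r e ((D ^ n) Q) = 0 := by
    simp only [V, Submodule.mem_inf, LinearMap.mem_range, Submodule.mem_iInf, LinearMap.mem_ker]
    refine and_congr ⟨?_, fun hQ ↦ ⟨fun b ↦ ⟨Q b, hQ b⟩, rfl⟩⟩ Iff.rfl
    rintro ⟨Q', rfl⟩ b
    exact (Q' b).2
  have hDV : ∀ Q ∈ V, D Q ∈ V := fun Q hQ ↦ by
    rw [hmem] at hQ ⊢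
    exact ⟨dirDeriv_mem_degreeLT hQ.1 v, fun n ↦ by simpa [pow_succ] using hQ.2 (n + 1)⟩
  have : Nontrivial V := ⟨⟨P, (hmem P).2 ⟨hPN, hzero⟩⟩, 0, by simpa [Subtype.ext_iff] using hP⟩
  obtain ⟨a, ha⟩ := Module.End.exists_eigenvalue (D.restrict hDV)
  obtain ⟨Q, hQ⟩ := ha.exists_hasEigenvector
  have hDQ : D Q = a • (Q : B → F[X]) := congrArg Subtype.val hQ.apply_eq_smul
  exact evalAt_ne_zero_of_dirDeriv_eq_smul hw hm he (by simpa using hQ.2) hDQ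
    (((hmem Q).1 Q.2).2 0)

end Nonvanishing

section Bounds

variable {B τ : Type*} [Fintype τ]

/-- The coefficients of the polynomials `P b` have norm at most `M` and vanish in degrees
`≥ N`. -/
structure CoeffBounded (N : ℕ) (M : ℝ) (P : B → ℂ[X]) : Prop where
  norm_coeff_le : ∀ b i, ‖(P b).coeff i‖ ≤ M
  coeff_eq_zero : ∀ b i, N ≤ i → (P b).coeff i = 0

variable {N : ℕ} {M : ℝ} {P : B → ℂ[X]} {w : B → τ → ℂ} {m : τ → ℂ}

lemma CoeffBounded.nonneg [Nonempty B] (hP : CoeffBounded N M P) : 0 ≤ M :=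
  (norm_nonneg _).trans (hP.norm_coeff_le (Classical.arbitrary B) 0)

lemma CoeffBounded.apply_dirDeriv {W c : ℝ} {u : τ → ℂ} (hP : CoeffBounded N M P)
    (hw : ∀ b, ‖w b ⬝ᵥ u‖ ≤ W) (hm : ‖m ⬝ᵥ u‖ ≤ c) :
    CoeffBounded N ((W + c * N) * M) (dirDeriv w m u P) where
  norm_coeff_le b i := by
    have : Nonempty B := ⟨b⟩
    have hM := hP.nonneg
    have hderiv : ‖(derivative (P b)).coeff i‖ ≤ N * M := by
      rw [coeff_derivative, mul_comm]
      obtain hi | hi := le_or_gt N (i + 1)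
      · rw [hP.coeff_eq_zero b _ hi, mul_zero, norm_zero]
        positivity
      · rw [norm_mul]
        gcongr
        · rw [← Nat.cast_succ, Complex.norm_natCast]
          exact_mod_cast hi.le
        · exact hP.norm_coeff_le b _
    rw [dirDeriv_apply, coeff_add, coeff_smul, coeff_smul, smul_eq_mul, smul_eq_mul]
    calc ‖(w b ⬝ᵥ u) * (P b).coeff i + (m ⬝ᵥ u) * (derivative (P b)).coeff i‖
        ≤ ‖w b ⬝ᵥ u‖ * ‖(P b).coeff i‖ + ‖m ⬝ᵥ u‖ * ‖(derivative (P b)).coeff i‖ := by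
          simp only [← norm_mul, norm_add_le]
      _ ≤ W * M + c * (N * M) := by
          gcongr
          · exact (norm_nonneg _).trans (hw b)
          · exact hw b
          · exact hP.norm_coeff_le b i
          · exact (norm_nonneg _).trans hm
      _ = (W + c * N) * M := by ring
  coeff_eq_zero b i hi := by
    simp [dirDeriv_apply, coeff_derivative, hP.coeff_eq_zero b i hi,
      hP.coeff_eq_zero b (i + 1) (by omega)]

lemma CoeffBounded.apply_prod_dirDeriv {W c : ℝ} {us : List (τ → ℂ)} (hP : CoeffBounded N M P)
    (hw : ∀ u ∈ us, ∀ b, ‖w b ⬝ᵥ u‖ ≤ W) (hm : ∀ u ∈ us, ‖m ⬝ᵥ u‖ ≤ c) :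
    CoeffBounded N ((W + c * N) ^ us.length * M) ((us.map (dirDeriv w m)).prod P) := by
  induction us with
  | nil => simpa using hP
  | cons u us ih =>
    rw [List.length_cons, pow_succ', mul_assoc, List.map_cons, List.prod_cons,
      Module.End.mul_apply]
    exact (ih (fun u' hu' ↦ hw u' (List.mem_cons_of_mem u hu'))
      fun u' hu' ↦ hm u' (List.mem_cons_of_mem u hu')).apply_dirDeriv
      (hw u List.mem_cons_self) (hm u List.mem_cons_self)

lemma CoeffBounded.norm_eval_le {ρ : ℝ} (hP : CoeffBounded N M P) (hρ : 1 ≤ ρ) {r : ℂ}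
    (hr : ‖r‖ ≤ ρ) (b : B) : ‖(P b).eval r‖ ≤ N * M * ρ ^ N := by
  have hsupp : (P b).support ⊆ Finset.range N := fun i hi ↦ Finset.mem_range.2 <| by
    by_contra! hNi
    exact mem_support_iff.1 hi (hP.coeff_eq_zero b i hNi)
  have hterm : ∀ i ∈ Finset.range N, ‖(P b).coeff i * r ^ i‖ ≤ M * ρ ^ N := fun i hi ↦ by
    rw [norm_mul, norm_pow]
    gcongr
    · exact (norm_nonneg _).trans (hP.norm_coeff_le b i)
    · exact hP.norm_coeff_le b i
    · exact (pow_le_pow_left₀ (norm_nonneg r) hr i).trans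
        (pow_le_pow_right₀ hρ (Finset.mem_range.1 hi).le)
  rw [eval_eq_sum, sum_eq_of_subset _ (by simp) hsupp]
  calc ‖∑ i ∈ Finset.range N, (P b).coeff i * r ^ i‖ ≤ ∑ _i ∈ Finset.range N, M * ρ ^ N :=
        norm_sum_le_of_le _ hterm
    _ = N * M * ρ ^ N := by rw [Finset.sum_const, Finset.card_range, nsmul_eq_mul, mul_assoc]

lemma CoeffBounded.norm_evalAt_le [Fintype B] {ρ E : ℝ} (hP : CoeffBounded N M P) (hρ : 1 ≤ ρ)
    {r : ℂ} (hr : ‖r‖ ≤ ρ) {e : B → ℂ} (he : ∀ b, ‖e b‖ ≤ E) :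
    ‖evalAt r e P‖ ≤ Fintype.card B * (N * M * ρ ^ N * E) := by
  rw [evalAt_apply, ← nsmul_eq_mul, ← Finset.card_univ]
  refine (norm_sum_le _ _).trans <| Finset.sum_le_card_nsmul _ _ _ fun b _ ↦ ?_
  rw [norm_mul]
  exact mul_le_mul (hP.norm_eval_le hρ hr b) (he b) (norm_nonneg _)
    ((norm_nonneg _).trans (hP.norm_eval_le hρ hr b))

end Bounds

section Line

variable {B τ : Type*} [Fintype B] [Fintype τ] (w : B → τ → ℂ) (m : τ → ℂ)

/-- The value at `z` of the exponential polynomial with frequencies `w` and linear form `m`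
encoded by a family of polynomials. -/
noncomputable def expEval (z : τ → ℂ) : (B → ℂ[X]) →ₗ[ℂ] ℂ :=
  evalAt (m ⬝ᵥ z) fun b ↦ Complex.exp (w b ⬝ᵥ z)

lemma hasDerivAt_expEval (z u : τ → ℂ) (P : B → ℂ[X]) (t : ℂ) :
    HasDerivAt (fun t : ℂ ↦ expEval w m (z + t • u) P)
      (expEval w m (z + t • u) (dirDeriv w m u P)) t := by
  simp only [expEval, evalAt_apply, dotProduct_add, dotProduct_smul, smul_eq_mul]
  refine HasDerivAt.fun_sum fun b _ ↦ ?_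
  have hlin (c a : ℂ) : HasDerivAt (fun t : ℂ ↦ c + t * a) a t := by
    simpa using ((hasDerivAt_id t).mul_const a).const_add c
  refine (((P b).hasDerivAt _).comp t (hlin _ _) |>.mul (hlin _ _).cexp).congr_deriv ?_
  simp only [dirDeriv_apply, eval_add, eval_smul, smul_eq_mul, Function.comp_apply]
  ring

lemma iteratedDeriv_expEval (z u : τ → ℂ) (P : B → ℂ[X]) (k : ℕ) :
    iteratedDeriv k (fun t : ℂ ↦ expEval w m (z + t • u) P) =
      fun t ↦ expEval w m (z + t • u) ((dirDeriv w m u ^ k) P) := by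
  induction k with
  | zero => simp
  | succ k ih =>
    funext t
    rw [iteratedDeriv_succ, ih, (hasDerivAt_expEval w m z u _ t).deriv, pow_succ',
      Module.End.mul_apply]

variable {w m}

lemma CoeffBounded.norm_expEval_line_le {N : ℕ} {M ρ Θ R : ℝ} {P : B → ℂ[X]}
    (hP : CoeffBounded N M P) {z u : τ → ℂ} (hρ : 1 ≤ ρ) (hm : ‖m ⬝ᵥ z‖ + R * ‖m ⬝ᵥ u‖ ≤ ρ)
    (hw : ∀ b, ‖w b ⬝ᵥ z‖ + R * ‖w b ⬝ᵥ u‖ ≤ Θ) {t : ℂ} (ht : ‖t‖ ≤ R) :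
    ‖expEval w m (z + t • u) P‖ ≤ Fintype.card B * (N * M * ρ ^ N * Real.exp Θ) := by
  have hline (x : τ → ℂ) : ‖x ⬝ᵥ (z + t • u)‖ ≤ ‖x ⬝ᵥ z‖ + R * ‖x ⬝ᵥ u‖ := by
    rw [dotProduct_add, dotProduct_smul]
    refine (norm_add_le _ _).trans ?_
    rw [norm_smul]
    gcongr
  refine hP.norm_evalAt_le hρ ((hline m).trans hm) fun b ↦ ?_
  rw [Complex.norm_exp]
  exact Real.exp_le_exp.2 ((Complex.re_le_norm _).trans ((hline _).trans (hw b)))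

lemma CoeffBounded.norm_expEval_dirDeriv_pow_le {N S k : ℕ} {M ρ Θ R : ℝ} {P : B → ℂ[X]}
    (hP : CoeffBounded N M P) {z u : τ → ℂ} (hρ : 1 ≤ ρ) (hm : ‖m ⬝ᵥ z‖ + R * ‖m ⬝ᵥ u‖ ≤ ρ)
    (hw : ∀ b, ‖w b ⬝ᵥ z‖ + R * ‖w b ⬝ᵥ u‖ ≤ Θ) (hSR : 2 * S ≤ R)
    (hzero : ∀ s < S, ∀ i < k, expEval w m (z + (s : ℂ) • u) ((dirDeriv w m u ^ i) P) = 0)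
    {s : ℕ} (hs : s < S) :
    ‖expEval w m (z + (s : ℂ) • u) ((dirDeriv w m u ^ k) P)‖ ≤ k.factorial *
      ((4 * S / R) ^ (S * k) * (Fintype.card B * (N * M * ρ ^ N * Real.exp Θ))) := by
  have hschwarz := norm_iteratedDeriv_natCast_le (k := k)
    (fun t ↦ (hasDerivAt_expEval w m z u P t).differentiableAt) hSR
    (by simpa only [iteratedDeriv_expEval] using hzero)
    (fun t ht ↦ hP.norm_expEval_line_le hρ hm hw ht) hs
  rwa [iteratedDeriv_expEval] at hschwarz

end Line

/-! ### Siegel's lemma and Liouville's inequality in number fields -/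

open NumberField

section NumberField

lemma mul_rpow_le_max_one_mul {c x e : ℝ} (hx : 1 ≤ x) (he₀ : 0 ≤ e) (he₁ : e ≤ 1) :
    c * (c * x) ^ e ≤ max 1 |c| * (max 1 |c| * x) := by
  have hc : 1 ≤ max 1 |c| := le_max_left _ _
  calc c * (c * x) ^ e ≤ |c| * |c * x| ^ e := by
        refine (le_abs_self _).trans ?_
        rw [abs_mul]
        gcongr
        exact Real.abs_rpow_le_abs_rpow _ _
    _ ≤ max 1 |c| * (max 1 |c| * x) ^ e := by
        rw [abs_mul, abs_of_nonneg (zero_le_one.trans hx)]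
        gcongr <;> exact le_max_right _ _
    _ ≤ max 1 |c| * (max 1 |c| * x) := by
        gcongr
        exact Real.rpow_le_self_of_one_le (one_le_mul_of_one_le_of_one_le hc hx) he₁

variable {K : Type*} [Field K]

/-- The restriction of a complex embedding of a number field to the ring of integers. -/
noncomputable abbrev intEmbedding (ψ : K →+* ℂ) : 𝓞 K →+* ℂ :=
  ψ.comp (algebraMap (𝓞 K) K)

lemma intEmbedding_injective (ψ : K →+* ℂ) :
    Function.Injective (intEmbedding ψ) :=
  ψ.injective.comp RingOfIntegers.coe_injective

variable [NumberField K]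

lemma house_le_iff {a : K} {M : ℝ} : house a ≤ M ↔ ∀ ψ : K →+* ℂ, ‖ψ a‖ ≤ M := by
  rw [house, pi_norm_le_iff_of_nonempty]
  rfl

variable (K) in
lemma exists_siegel_const :
    ∃ c : ℝ, ∀ (α β : Type*) [Fintype α] [Fintype β] (a : Matrix α β (𝓞 K)) (A : ℝ), a ≠ 0 →
      0 < Fintype.card α → Fintype.card α < Fintype.card β → (∀ k l, house (a k l : K) ≤ A) →
      ∃ ξ : β → 𝓞 K, ξ ≠ 0 ∧ a.mulVec ξ = 0 ∧ ∀ l, house (ξ l : K) ≤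
        c * (c * Fintype.card β * A) ^
          (Fintype.card α / (Fintype.card β - Fintype.card α) : ℝ) := by
  classical
  exact ⟨_, fun α β _ _ a A ha hα hαβ hA ↦
    house.exists_ne_zero_int_vec_house_le K a ha hα hαβ rfl hA rfl⟩

variable (K) in
lemma exists_ne_zero_apply_eq_zero_norm_le :
    ∃ c : ℝ, 1 ≤ c ∧ ∀ (α β : Type*) [Fintype α] [Fintype β] [DecidableEq β]
      (L : (β → 𝓞 K) →ₗ[𝓞 K] (α → 𝓞 K)) (A : ℝ), 1 ≤ A → 0 < Fintype.card α →
      2 * Fintype.card α ≤ Fintype.card β →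
      (∀ k l (ψ : K →+* ℂ), ‖intEmbedding ψ (L (Pi.single l 1) k)‖ ≤ A) →
      ∃ ξ : β → 𝓞 K, ξ ≠ 0 ∧ L ξ = 0 ∧
        ∀ l (ψ : K →+* ℂ), ‖intEmbedding ψ (ξ l)‖ ≤ c * (c * (Fintype.card β * A)) := by
  obtain ⟨c, hc⟩ := exists_siegel_const K
  refine ⟨max 1 |c|, le_max_left _ _, fun α β _ _ _ L A hA hα hαβ hL ↦ ?_⟩
  have : Nonempty β := Fintype.card_pos_iff.1 (by omega)
  have hβA : 1 ≤ Fintype.card β * A :=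
    one_le_mul_of_one_le_of_one_le (by exact_mod_cast Fintype.card_pos) hA
  obtain rfl | hL₀ := eq_or_ne L 0
  · refine ⟨1, one_ne_zero, rfl, fun l ψ ↦ ?_⟩
    rw [Pi.one_apply, map_one, norm_one]
    have hmax : 1 ≤ max 1 |c| := le_max_left _ _
    exact one_le_mul_of_one_le_of_one_le hmax (one_le_mul_of_one_le_of_one_le hmax hβA)
  · obtain ⟨ξ, hξ₀, hLξ, hξ⟩ := hc α β (LinearMap.toMatrix' L) A (by simpa using hL₀) hα (by omega)
      fun k l ↦ house_le_iff.2 (by simpa [LinearMap.toMatrix'_apply] using hL k l)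
    refine ⟨ξ, hξ₀, by rwa [LinearMap.toMatrix'_mulVec] at hLξ, fun l ψ ↦ ?_⟩
    refine (house_le_iff.1 (hξ l) ψ).trans ?_
    rw [mul_assoc c]
    have hα' : (0 : ℝ) < Fintype.card α := by exact_mod_cast hα
    have hαβ' : (2 * Fintype.card α : ℝ) ≤ Fintype.card β := by exact_mod_cast hαβ
    refine mul_rpow_le_max_one_mul hβA (div_nonneg hα'.le (by linarith)) ?_
    rw [div_le_one (by linarith)]
    linarith

lemma one_le_norm_mul_pow_finrank {a : 𝓞 K} (ha : a ≠ 0) (φ : K →+* ℂ) {H : ℝ} (hH₁ : 1 ≤ H)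
    (hH : ∀ ψ : K →+* ℂ, ‖intEmbedding ψ a‖ ≤ H) :
    1 ≤ ‖intEmbedding φ a‖ * H ^ Module.finrank ℚ K := by
  classical
  calc (1 : ℝ) ≤ ‖((Algebra.norm ℤ a : ℤ) : ℂ)‖ := by
        rw [Complex.norm_intCast]
        exact_mod_cast Int.one_le_abs (Algebra.norm_ne_zero_iff.2 ha)
    _ = ∏ σ : K →ₐ[ℚ] ℂ, ‖σ a‖ := by
        rw [← norm_prod, ← Algebra.norm_eq_prod_embeddings ℚ ℂ, ← Algebra.coe_norm_int]
        simp
    _ = ‖intEmbedding φ a‖ * ∏ σ ∈ Finset.univ.erase φ.toRatAlgHom, ‖σ a‖ :=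
        (Finset.mul_prod_erase _ _ (Finset.mem_univ φ.toRatAlgHom)).symm
    _ ≤ ‖intEmbedding φ a‖ * ∏ _σ ∈ Finset.univ.erase φ.toRatAlgHom, H := by
        gcongr with σ
        exact hH σ
    _ ≤ ‖intEmbedding φ a‖ * H ^ Module.finrank ℚ K := by
        rw [Finset.prod_const, ← AlgHom.card ℚ K ℂ]
        gcongr
        exact Finset.card_le_univ _

lemma exists_pos_forall_natCast_mul_mem_range {ι : Type*} [Finite ι] (a : ι → K) :
    ∃ δ : ℕ, 0 < δ ∧ ∀ i, ∃ x : 𝓞 K, (x : K) = δ * a i := by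
  classical
  have := Fintype.ofFinite ι
  obtain ⟨y, hy₀, hy⟩ := exists_integral_multiples ℤ ℚ (Finset.univ.image a)
  refine ⟨y.natAbs, Int.natAbs_pos.2 hy₀, fun i ↦ ?_⟩
  have hintegral : IsIntegral ℤ (y.natAbs * a i) := by
    have hyi := hy (a i) (Finset.mem_image_of_mem a (Finset.mem_univ i))
    rw [zsmul_eq_mul] at hyi
    obtain h | h := y.natAbs_eq
    · rw [h] at hyi
      simpa using hyi
    · rw [h] at hyi
      simpa using hyi.neg
  exact ⟨⟨_, hintegral⟩, rfl⟩

end NumberField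

/-! ### The Schwarz lemma on Cartesian products -/

section CartesianProduct

lemma exists_perm_replicate_append {κ : Type*} [Fintype κ] {js : List κ} {k : ℕ}
    (h : Fintype.card κ * k < js.length) :
    ∃ j js', js.Perm (List.replicate (k + 1) j ++ js') := by
  classical
  obtain ⟨j, -, hj⟩ : ∃ j ∈ Finset.univ, k < js.count j := by
    refine Finset.exists_lt_of_sum_lt (f := fun _ ↦ k) ?_
    have hlength : ∑ j, js.count j = js.length := by
      simpa using Multiset.sum_count_eq_card (s := Finset.univ) (m := (js : Multiset κ)) (by simp)
    simpa [hlength] using h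
  exact ⟨j, (List.replicate_sublist_iff.2 hj).exists_perm_append⟩

variable {κ τ : Type*} [Fintype κ]

/-- The point with coordinates `s` in the lattice spanned by the vectors `y j`. -/
noncomputable def latticePoint (y : κ → τ → ℂ) (s : κ → ℕ) : τ → ℂ := ∑ j, (s j : ℂ) • y j

lemma latticePoint_update [DecidableEq κ] (y : κ → τ → ℂ) (s : κ → ℕ) (j : κ) (t : ℕ) :
    latticePoint y (Function.update s j t) =
      latticePoint y (Function.update s j 0) + (t : ℂ) • y j := by
  simp only [latticePoint, ← Finset.add_sum_erase _ _ (Finset.mem_univ j), Function.update_self,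
    Nat.cast_zero, zero_smul, zero_add]
  rw [add_comm]
  congr 1
  refine Finset.sum_congr rfl fun i hi ↦ ?_
  rw [Function.update_of_ne (Finset.ne_of_mem_erase hi),
    Function.update_of_ne (Finset.ne_of_mem_erase hi)]

variable [Fintype τ]

lemma norm_dotProduct_latticePoint_le {y : κ → τ → ℂ} {x : τ → ℂ} {c : ℝ}
    (hc : ∀ j, ‖x ⬝ᵥ y j‖ ≤ c) {s : κ → ℕ} {S : ℕ} (hs : ∀ j, s j ≤ S) :
    ‖x ⬝ᵥ latticePoint y s‖ ≤ Fintype.card κ * (S * c) := by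
  rw [latticePoint, dotProduct_sum, ← nsmul_eq_mul, ← Finset.card_univ]
  refine (norm_sum_le _ _).trans <| Finset.sum_le_card_nsmul _ _ _ fun j _ ↦ ?_
  rw [dotProduct_smul, norm_smul, Complex.norm_natCast]
  exact mul_le_mul (by exact_mod_cast hs j) (hc j) (norm_nonneg _) (Nat.cast_nonneg _)

lemma exists_prod_dirDeriv_eq_pow_mul {B : Type*} {k : ℕ} (w : B → τ → ℂ) (m : τ → ℂ)
    (y : κ → τ → ℂ) {js : List κ} (hk : Fintype.card κ * k < js.length) :
    ∃ j js', js.length = k + 1 + List.length js' ∧ (js.map fun j ↦ dirDeriv w m (y j)).prod =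
      dirDeriv w m (y j) ^ (k + 1) * ((js'.map y).map (dirDeriv w m)).prod := by
  obtain ⟨j, js', hperm⟩ := exists_perm_replicate_append hk
  refine ⟨j, js', by simpa using hperm.length_eq, ?_⟩
  have hprod := prod_map_dirDeriv_eq_of_perm w m (hperm.map y)
  rwa [List.map_append, List.map_replicate, List.map_append, List.map_replicate, List.prod_append,
    List.prod_replicate, List.map_map] at hprod

/-- All derivatives of order less than `n` of the exponential polynomial encoded by `P` vanish at
the lattice points with coordinates less than `S`. -/
def VanishesOnBox {B : Type*} [Fintype B] (w : B → τ → ℂ) (m : τ → ℂ) (y : κ → τ → ℂ)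
    (S n : ℕ) (P : B → ℂ[X]) : Prop :=
  ∀ s : κ → ℕ, (∀ j, s j < S) → ∀ us : List (τ → ℂ), us.length < n →
    expEval w m (latticePoint y s) ((us.map (dirDeriv w m)).prod P) = 0

variable {B : Type*} [Fintype B] {w : B → τ → ℂ} {m : τ → ℂ} {y : κ → τ → ℂ} {N S n k : ℕ}
  {M W c R : ℝ} {P : B → ℂ[X]}

lemma norm_dotProduct_latticePoint_update_add_le [DecidableEq κ] {x : τ → ℂ} (hR : 0 ≤ R)
    (hc : ∀ j, ‖x ⬝ᵥ y j‖ ≤ c) {s : κ → ℕ} (hs : ∀ j, s j < S) (j : κ) :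
    ‖x ⬝ᵥ latticePoint y (Function.update s j 0)‖ + R * ‖x ⬝ᵥ y j‖ ≤
      (Fintype.card κ * S + R) * c := by
  have hle (i : κ) : Function.update s j 0 i ≤ S :=
    (Function.forall_update_iff s fun _ t ↦ t ≤ S).2 ⟨S.zero_le, fun i _ ↦ (hs i).le⟩ i
  rw [add_mul, mul_assoc]
  exact add_le_add (norm_dotProduct_latticePoint_le hc hle) (by gcongr; exact hc j)

-- Among `n` derivations taken from the `∂_{y j}`, one occurs `k + 1` times: this reduces the
-- estimate to the one-variable Schwarz lemma on a line in direction `y j`.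
lemma VanishesOnBox.norm_expEval_prod_le (hvan : VanishesOnBox w m y S n P)
    (hP : CoeffBounded N M P) (hw : ∀ b j, ‖w b ⬝ᵥ y j‖ ≤ W) (hm : ∀ j, ‖m ⬝ᵥ y j‖ ≤ c)
    (hk : Fintype.card κ * k < n) (hSR : 2 * S ≤ R) {s : κ → ℕ} (hs : ∀ j, s j < S) {js : List κ}
    (hjs : js.length = n) :
    ‖expEval w m (latticePoint y s) ((js.map fun j ↦ dirDeriv w m (y j)).prod P)‖ ≤
      (k + 1).factorial * ((4 * S / R) ^ (S * (k + 1)) * (Fintype.card B *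
        (N * ((W + c * N) ^ (n - (k + 1)) * M) * (1 + (Fintype.card κ * S + R) * c) ^ N *
          Real.exp ((Fintype.card κ * S + R) * W)))) := by
  classical
  obtain ⟨j, js', hlength, hprod⟩ := exists_prod_dirDeriv_eq_pow_mul w m y (hk.trans_eq hjs.symm)
  have hR : 0 ≤ R := le_trans (by positivity) hSR
  have hc : 0 ≤ c := (norm_nonneg _).trans (hm j)
  have hP' : CoeffBounded N ((W + c * N) ^ (n - (k + 1)) * M)
      (((js'.map y).map (dirDeriv w m)).prod P) := by
    rw [← hjs, hlength, Nat.add_sub_cancel_left, ← List.length_map (f := y)]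
    exact hP.apply_prod_dirDeriv (by simpa using fun i _ b ↦ hw b i) (by simpa using fun i _ ↦ hm i)
  rw [hprod, Module.End.mul_apply, ← Function.update_eq_self j s, latticePoint_update]
  refine hP'.norm_expEval_dirDeriv_pow_le (le_add_of_nonneg_right (by positivity))
    ((norm_dotProduct_latticePoint_update_add_le hR hm hs j).trans (by linarith))
    (fun b ↦ norm_dotProduct_latticePoint_update_add_le hR (hw b) hs j) hSR (fun t ht i hi ↦ ?_)
    (hs j)
  rw [← latticePoint_update]
  have hzero := hvan (Function.update s j t)
    ((Function.forall_update_iff s fun _ t ↦ t < S).2 ⟨ht, fun i _ ↦ hs i⟩)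
    (List.replicate i (y j) ++ js'.map y) (by simp; omega)
  rwa [List.map_append, List.prod_append, List.map_replicate, List.prod_replicate,
    Module.End.mul_apply] at hzero

end CartesianProduct

/-! ### Exponential systems with algebraic data -/

/-- A linear form and exponential functions `exp (freq i ⬝ᵥ z)` of `z : τ → ℂ`, with coefficients
in `𝓞 K` (embedded into `ℂ` by `φ`), whose values at a basis `point` of `τ → ℂ` lie in `K`; `den`
is a common denominator of the values of the exponentials. -/
structure ExpSystem (K ι κ τ : Type*) [Field K] [Fintype τ] where
  φ : K →+* ℂ
  freq : ι → τ → 𝓞 K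
  form : τ → 𝓞 K
  point : Module.Basis κ ℂ (τ → ℂ)
  den : ℕ
  den_pos : 0 < den
  formValue : κ → 𝓞 K
  intEmbedding_formValue : ∀ j,
    intEmbedding φ (formValue j) = (intEmbedding φ ∘ form) ⬝ᵥ point j
  expValue : ι → κ → 𝓞 K
  intEmbedding_expValue : ∀ i j,
    intEmbedding φ (expValue i j) = den * Complex.exp ((intEmbedding φ ∘ freq i) ⬝ᵥ point j)

namespace ExpSystem

section Jets

variable {K ι κ τ : Type*} [Field K] [Fintype τ] (D : ExpSystem K ι κ τ) (N S : ℕ)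

/-- The frequency of the monomial `∏ i, exp (freq i ⬝ᵥ z) ^ b i`. -/
noncomputable def weight [Fintype ι] (b : ι → Fin N) : τ → 𝓞 K := ∑ i, (b i : ℕ) • D.freq i

/-- The value of the linear form at the lattice point with coordinates `s`. -/
noncomputable def formAt [Fintype κ] (s : κ → ℕ) : 𝓞 K := ∑ j, s j • D.formValue j

variable {D N S}

lemma intEmbedding_comp_weight [Fintype ι] (ψ : K →+* ℂ) (b : ι → Fin N) :
    intEmbedding ψ ∘ D.weight N b = ∑ i, ((b i : ℕ) : ℂ) • (intEmbedding ψ ∘ D.freq i) := by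
  funext σ
  simp [weight, Finset.sum_apply]

lemma intEmbedding_formAt [Fintype κ] (s : κ → ℕ) :
    intEmbedding D.φ (D.formAt s) = (intEmbedding D.φ ∘ D.form) ⬝ᵥ latticePoint D.point s := by
  simp only [formAt, latticePoint, nsmul_eq_mul, map_sum, map_mul, map_natCast,
    D.intEmbedding_formValue, dotProduct_sum, dotProduct_smul, smul_eq_mul]

variable [Fintype ι] [Fintype κ]

variable (D N S) in
/-- The value of the monomial `∏ i, exp (freq i ⬝ᵥ z) ^ b i` at the lattice point with coordinates
`s ≤ S`, multiplied by the power of `den` that makes it integral for all such `b` and `s`. -/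
noncomputable def expAt (s : κ → ℕ) (b : ι → Fin N) : 𝓞 K :=
  ∏ i, ∏ j, (D.expValue i j ^ (b i * s j) * (D.den : 𝓞 K) ^ (N * S - b i * s j))

lemma weight_dotProduct_latticePoint (b : ι → Fin N) (s : κ → ℕ) :
    (intEmbedding D.φ ∘ D.weight N b) ⬝ᵥ latticePoint D.point s =
      ∑ i, ∑ j, ((b i * s j : ℕ) : ℂ) * ((intEmbedding D.φ ∘ D.freq i) ⬝ᵥ D.point j) := by
  rw [intEmbedding_comp_weight, latticePoint, sum_dotProduct]
  simp only [dotProduct_sum, smul_dotProduct, dotProduct_smul, smul_eq_mul, Nat.cast_mul]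
  exact Finset.sum_congr rfl fun i _ ↦ Finset.sum_congr rfl fun j _ ↦ by ring

lemma intEmbedding_expAt {s : κ → ℕ} (hs : ∀ j, s j ≤ S) (b : ι → Fin N) :
    intEmbedding D.φ (D.expAt N S s b) =
      (D.den : ℂ) ^ (Fintype.card ι * Fintype.card κ * (N * S)) *
        Complex.exp ((intEmbedding D.φ ∘ D.weight N b) ⬝ᵥ latticePoint D.point s) := by
  have hpow (i : ι) (j : κ) :
      intEmbedding D.φ (D.expValue i j ^ (b i * s j) * (D.den : 𝓞 K) ^ (N * S - b i * s j)) =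
        (D.den : ℂ) ^ (N * S) *
          Complex.exp ((b i * s j : ℕ) * ((intEmbedding D.φ ∘ D.freq i) ⬝ᵥ D.point j)) := by
    have hle : b i * s j ≤ N * S := Nat.mul_le_mul (b i).2.le (hs j)
    rw [map_mul, map_pow, map_pow, map_natCast, D.intEmbedding_expValue, mul_pow,
      mul_right_comm, ← pow_add, Nat.add_sub_cancel' hle, Complex.exp_nat_mul]
  rw [expAt, map_prod, weight_dotProduct_latticePoint]
  simp_rw [map_prod, hpow, Finset.prod_mul_distrib, Complex.exp_sum, Finset.prod_const,
    Finset.card_univ, ← pow_mul]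
  congr 2
  ring

variable [DecidableEq ι] [DecidableEq τ]

variable (D N S) in
/-- The value at the lattice point with coordinates `s ≤ S` of the derivative of an exponential
polynomial with respect to the coordinates in the list `l`, multiplied by the power of `den` from
`expAt`. -/
noncomputable def jet (s : κ → ℕ) (l : List τ) : ((ι → Fin N) → (𝓞 K)[X]) →ₗ[𝓞 K] 𝓞 K :=
  evalAt (D.formAt s) (D.expAt N S s) ∘ₗ
    ((l.map fun σ ↦ Pi.single σ 1).map (dirDeriv (D.weight N) D.form)).prod

lemma jet_eq_of_perm {l l' : List τ} (h : l.Perm l') (s : κ → ℕ) :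
    D.jet N S s l = D.jet N S s l' := by
  rw [jet, jet, prod_map_dirDeriv_eq_of_perm _ _ (h.map _)]

lemma intEmbedding_jet (ψ : K →+* ℂ) (s : κ → ℕ) (l : List τ) (P : (ι → Fin N) → (𝓞 K)[X]) :
    intEmbedding ψ (D.jet N S s l P) =
      evalAt (intEmbedding ψ (D.formAt s)) (intEmbedding ψ ∘ D.expAt N S s)
        (((l.map fun σ ↦ Pi.single σ 1).map (dirDeriv (fun b ↦ intEmbedding ψ ∘ D.weight N b)
          (intEmbedding ψ ∘ D.form))).prod fun b ↦ (P b).map (intEmbedding ψ)) := by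
  have hsingle (σ : τ) : intEmbedding ψ ∘ Pi.single σ 1 = Pi.single σ (1 : ℂ) :=
    funext fun σ' ↦ by simp [Pi.single_apply]
  rw [jet, LinearMap.comp_apply, map_evalAt, map_prod_dirDeriv, List.map_map, List.map_map]
  simp only [Function.comp_def (dirDeriv _ _), Function.comp_def (fun _ ↦ dirDeriv _ _ _), hsingle]

lemma intEmbedding_jet_eq_expEval {s : κ → ℕ} (hs : ∀ j, s j ≤ S) (l : List τ)
    (P : (ι → Fin N) → (𝓞 K)[X]) :
    intEmbedding D.φ (D.jet N S s l P) =
      (D.den : ℂ) ^ (Fintype.card ι * Fintype.card κ * (N * S)) *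
        expEval (fun b ↦ intEmbedding D.φ ∘ D.weight N b) (intEmbedding D.φ ∘ D.form)
          (latticePoint D.point s) (((l.map fun σ ↦ Pi.single σ 1).map
            (dirDeriv (fun b ↦ intEmbedding D.φ ∘ D.weight N b) (intEmbedding D.φ ∘ D.form))).prod
              fun b ↦ (P b).map (intEmbedding D.φ)) := by
  rw [intEmbedding_jet, expEval, evalAt_apply, evalAt_apply, Finset.mul_sum]
  refine Finset.sum_congr rfl fun b _ ↦ ?_
  rw [Function.comp_apply, intEmbedding_expAt hs, intEmbedding_formAt]
  ring

end Jets

/-! ### Size estimates -/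

section Bounds

variable {K ι κ τ : Type*} [Field K] [Fintype τ]

lemma norm_weight_dotProduct_le [Fintype ι] {D : ExpSystem K ι κ τ} {N : ℕ} (ψ : K →+* ℂ)
    {u : τ → ℂ} {a : ℝ} (ha : ∀ i, ‖(intEmbedding ψ ∘ D.freq i) ⬝ᵥ u‖ ≤ a) (b : ι → Fin N) :
    ‖(intEmbedding ψ ∘ D.weight N b) ⬝ᵥ u‖ ≤ Fintype.card ι * (N * a) := by
  rw [intEmbedding_comp_weight, sum_dotProduct, ← nsmul_eq_mul, ← Finset.card_univ]
  refine (norm_sum_le _ _).trans <| Finset.sum_le_card_nsmul _ _ _ fun i _ ↦ ?_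
  rw [smul_dotProduct, norm_smul, Complex.norm_natCast]
  exact mul_le_mul (by exact_mod_cast (b i).2.le) (ha i) (norm_nonneg _) (Nat.cast_nonneg _)

/-- A constant `c ≥ 1` that bounds the data of `D` and the coordinates, in the basis `D.point`,
of the standard basis vectors. -/
structure IsBound [Fintype κ] [DecidableEq τ] (D : ExpSystem K ι κ τ) (c : ℝ) : Prop where
  one_le : 1 ≤ c
  freq_le : ∀ (ψ : K →+* ℂ) i σ, ‖intEmbedding ψ (D.freq i σ)‖ ≤ c
  form_le : ∀ (ψ : K →+* ℂ) σ, ‖intEmbedding ψ (D.form σ)‖ ≤ c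
  formValue_le : ∀ (ψ : K →+* ℂ) j, ‖intEmbedding ψ (D.formValue j)‖ ≤ c
  expValue_le : ∀ (ψ : K →+* ℂ) i j, ‖intEmbedding ψ (D.expValue i j)‖ ≤ c
  den_le : D.den ≤ c
  freq_dotProduct_point_le : ∀ i j, ‖(intEmbedding D.φ ∘ D.freq i) ⬝ᵥ D.point j‖ ≤ c
  sum_norm_repr_le : ∀ σ, ∑ j, ‖D.point.repr (Pi.single σ 1) j‖ ≤ c

variable [Fintype κ] [DecidableEq τ]

lemma IsBound.norm_formAt_le {D : ExpSystem K ι κ τ} {S : ℕ} {c : ℝ} (hD : D.IsBound c)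
    (ψ : K →+* ℂ) {s : κ → ℕ} (hs : ∀ j, s j ≤ S) :
    ‖intEmbedding ψ (D.formAt s)‖ ≤ Fintype.card κ * (S * c) := by
  rw [formAt, map_sum, ← nsmul_eq_mul, ← Finset.card_univ]
  refine (norm_sum_le _ _).trans <| Finset.sum_le_card_nsmul _ _ _ fun j _ ↦ ?_
  rw [nsmul_eq_mul, map_mul, map_natCast, norm_mul, Complex.norm_natCast]
  exact mul_le_mul (by exact_mod_cast hs j) (hD.formValue_le ψ j) (norm_nonneg _)
    (Nat.cast_nonneg _)

lemma exists_isBound [Finite ι] [NumberField K] (D : ExpSystem K ι κ τ) : ∃ c, D.IsBound c := by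
  have hle (a : ℝ) : ∀ᶠ c in Filter.atTop, a ≤ c := Filter.eventually_ge_atTop a
  have hbound : ∀ᶠ c in Filter.atTop, D.IsBound c := by
    filter_upwards [hle 1,
      Filter.eventually_all.2 fun ψ : K →+* ℂ ↦ Filter.eventually_all.2 fun i ↦
        Filter.eventually_all.2 fun σ ↦ hle ‖intEmbedding ψ (D.freq i σ)‖,
      Filter.eventually_all.2 fun ψ : K →+* ℂ ↦ Filter.eventually_all.2 fun σ ↦
        hle ‖intEmbedding ψ (D.form σ)‖,
      Filter.eventually_all.2 fun ψ : K →+* ℂ ↦ Filter.eventually_all.2 fun j ↦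
        hle ‖intEmbedding ψ (D.formValue j)‖,
      Filter.eventually_all.2 fun ψ : K →+* ℂ ↦ Filter.eventually_all.2 fun i ↦
        Filter.eventually_all.2 fun j ↦ hle ‖intEmbedding ψ (D.expValue i j)‖,
      hle D.den,
      Filter.eventually_all.2 fun i ↦ Filter.eventually_all.2 fun j ↦
        hle ‖(intEmbedding D.φ ∘ D.freq i) ⬝ᵥ D.point j‖,
      Filter.eventually_all.2 fun σ ↦ hle (∑ j, ‖D.point.repr (Pi.single σ 1) j‖)]
      with c h₁ h₂ h₃ h₄ h₅ h₆ h₇ h₈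
    exact ⟨h₁, h₂, h₃, h₄, h₅, h₆, h₇, h₈⟩
  exact hbound.exists

namespace IsBound

variable [Fintype ι] {D : ExpSystem K ι κ τ} {N S n : ℕ} {c M : ℝ}

lemma norm_expAt_le (hD : D.IsBound c) (ψ : K →+* ℂ) {s : κ → ℕ} (hs : ∀ j, s j ≤ S)
    (b : ι → Fin N) :
    ‖intEmbedding ψ (D.expAt N S s b)‖ ≤ c ^ (Fintype.card ι * Fintype.card κ * (N * S)) := by
  have hterm (i : ι) (j : κ) : ‖intEmbedding ψ (D.expValue i j ^ (b i * s j) *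
      (D.den : 𝓞 K) ^ (N * S - b i * s j))‖ ≤ c ^ (N * S) := by
    have hle : b i * s j ≤ N * S := Nat.mul_le_mul (b i).2.le (hs j)
    rw [map_mul, map_pow, map_pow, map_natCast, norm_mul, norm_pow, norm_pow,
      Complex.norm_natCast, ← Nat.add_sub_cancel' hle, pow_add, Nat.add_sub_cancel' hle]
    have hc : 0 ≤ c := zero_le_one.trans hD.one_le
    gcongr
    exacts [hD.expValue_le ψ i j, hD.den_le]
  rw [expAt, map_prod, norm_prod]
  simp_rw [map_prod, norm_prod]
  calc ∏ i, ∏ j, _ ≤ ∏ _ : ι, ∏ _ : κ, c ^ (N * S) := by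
        gcongr with i _ j _
        exact hterm i j
    _ = c ^ (Fintype.card ι * Fintype.card κ * (N * S)) := by
        simp only [Finset.prod_const, Finset.card_univ, ← pow_mul]
        congr 1
        ring

variable [DecidableEq ι]

lemma norm_jet_le (hD : D.IsBound c) (ψ : K →+* ℂ) {s : κ → ℕ} (hs : ∀ j, s j ≤ S) (l : List τ)
    {P : (ι → Fin N) → (𝓞 K)[X]} (hP : CoeffBounded N M fun b ↦ (P b).map (intEmbedding ψ)) :
    ‖intEmbedding ψ (D.jet N S s l P)‖ ≤
      (N : ℝ) ^ Fintype.card ι * (N * (((Fintype.card ι + 1) * c * N) ^ l.length * M) *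
        ((Fintype.card κ * S + 1) * c) ^ N *
          c ^ (Fintype.card ι * Fintype.card κ * (N * S))) := by
  have hc := hD.one_le
  have hderiv := hP.apply_prod_dirDeriv (w := fun b ↦ intEmbedding ψ ∘ D.weight N b)
    (m := intEmbedding ψ ∘ D.form) (us := l.map fun σ ↦ Pi.single σ 1)
    (W := Fintype.card ι * (N * c)) (c := c)
    (List.forall_mem_map.2 fun σ _ b ↦
      norm_weight_dotProduct_le ψ (fun i ↦ by simpa using hD.freq_le ψ i σ) b)
    (List.forall_mem_map.2 fun σ _ ↦ by simpa using hD.form_le ψ σ)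
  rw [List.length_map, show Fintype.card ι * (N * c) + c * N = (Fintype.card ι + 1) * c * N by ring]
    at hderiv
  rw [intEmbedding_jet]
  refine (hderiv.norm_evalAt_le (ρ := (Fintype.card κ * S + 1) * c) ?_
    ((hD.norm_formAt_le ψ hs).trans (by linarith)) (hD.norm_expAt_le ψ hs)).trans_eq (by simp)
  exact one_le_mul_of_one_le_of_one_le (le_add_of_nonneg_left (by positivity)) hc

end IsBound

end Bounds

section UniformBounds

variable {K ι κ τ : Type*} [Field K] [NumberField K] [Fintype ι] [Fintype κ] [Fintype τ]
  [DecidableEq ι] [DecidableEq τ]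

lemma exists_norm_jet_le (D : ExpSystem K ι κ τ) (S a : ℕ) :
    ∃ C : ℝ, 1 ≤ C ∧ ∀ (N n : ℕ) (ψ : K →+* ℂ) (s : κ → ℕ) (l : List τ) (M : ℝ)
      (P : (ι → Fin N) → (𝓞 K)[X]), 1 ≤ N → N ≤ n → (∀ j, s j ≤ S) → l.length ≤ a * n →
      CoeffBounded N M (fun b ↦ (P b).map (intEmbedding ψ)) →
      ‖intEmbedding ψ (D.jet N S s l P)‖ ≤ (C * n ^ a) ^ n * M := by
  obtain ⟨c, hD⟩ := D.exists_isBound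
  have hc := hD.one_le
  set p := Fintype.card ι
  set ρ : ℝ := (Fintype.card κ * S + 1) * c
  have hρ : 1 ≤ ρ :=
    one_le_mul_of_one_le_of_one_le (le_add_of_nonneg_left (by positivity)) hc
  have hpc : 1 ≤ (p + 1) * c :=
    one_le_mul_of_one_le_of_one_le (le_add_of_nonneg_left (by positivity)) hc
  refine ⟨2 ^ (p + 1) * ((p + 1) * c) ^ a * ρ * c ^ (p * Fintype.card κ * S), ?_,
    fun N n ψ s l M P hN hNn hs hl hP ↦ (hD.norm_jet_le ψ hs l hP).trans ?_⟩
  · have h₁ : (1 : ℝ) ≤ 2 ^ (p + 1) := one_le_pow₀ one_le_two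
    have h₂ := one_le_pow₀ hpc (n := a)
    have h₃ := one_le_pow₀ hc (n := p * Fintype.card κ * S)
    exact one_le_mul_of_one_le_of_one_le (one_le_mul_of_one_le_of_one_le
      (one_le_mul_of_one_le_of_one_le h₁ h₂) hρ) h₃
  · have : NeZero N := ⟨by omega⟩
    have hM : 0 ≤ M := hP.nonneg
    have hN' : (N : ℝ) ≤ 2 ^ n := by exact_mod_cast hNn.trans Nat.lt_two_pow_self.le
    have hlen : ((p + 1) * c * N) ^ l.length ≤ ((p + 1) * c * n) ^ (a * n) := by
      have hN₁ : (1 : ℝ) ≤ N := by exact_mod_cast hN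
      calc ((p + 1) * c * N) ^ l.length ≤ ((p + 1) * c * N) ^ (a * n) :=
            pow_le_pow_right₀ (one_le_mul_of_one_le_of_one_le hpc hN₁) hl
        _ ≤ ((p + 1) * c * n) ^ (a * n) := by gcongr
    calc (N : ℝ) ^ p * (N * (((p + 1) * c * N) ^ l.length * M) * ρ ^ N *
          c ^ (p * Fintype.card κ * (N * S)))
        ≤ (2 ^ n) ^ p * (2 ^ n * (((p + 1) * c * n) ^ (a * n) * M) * ρ ^ n *
            c ^ (p * Fintype.card κ * (n * S))) := by gcongr
      _ = (2 ^ (p + 1) * ((p + 1) * c) ^ a * ρ * c ^ (p * Fintype.card κ * S) * n ^ a) ^ n *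
            M := by
          simp only [mul_pow, ← pow_mul]
          ring_nf

end UniformBounds

section Vanishing

variable {K ι κ τ : Type*} [Field K] [Fintype ι] [Fintype κ] [Fintype τ]
  [DecidableEq ι] [DecidableEq τ]

variable {D : ExpSystem K ι κ τ} {N S n k : ℕ} {c M R : ℝ} {P : (ι → Fin N) → (𝓞 K)[X]}

lemma expEval_prod_eq_zero_of_jet_eq_zero {s : κ → ℕ} (hs : ∀ j, s j ≤ S) {us : List (τ → ℂ)}
    (hjet : ∀ l : List τ, l.length = us.length → D.jet N S s l P = 0) :
    expEval (fun b ↦ intEmbedding D.φ ∘ D.weight N b) (intEmbedding D.φ ∘ D.form)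
      (latticePoint D.point s) ((us.map (dirDeriv (fun b ↦ intEmbedding D.φ ∘ D.weight N b)
        (intEmbedding D.φ ∘ D.form))).prod fun b ↦ (P b).map (intEmbedding D.φ)) = 0 := by
  refine apply_prod_eq_zero_of_basis _ (Pi.basisFun ℂ τ) _ fun l hl ↦ ?_
  have hzero := congrArg (intEmbedding D.φ) (hjet l hl)
  rw [map_zero, intEmbedding_jet_eq_expEval hs, mul_eq_zero] at hzero
  simpa [Function.comp_def] using
    hzero.resolve_left (pow_ne_zero _ (by exact_mod_cast D.den_pos.ne'))

lemma vanishesOnBox_of_jet_eq_zero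
    (hjet : ∀ s : κ → ℕ, (∀ j, s j < S) → ∀ l : List τ, l.length < n → D.jet N S s l P = 0) :
    VanishesOnBox (fun b ↦ intEmbedding D.φ ∘ D.weight N b) (intEmbedding D.φ ∘ D.form) D.point
      S n fun b ↦ (P b).map (intEmbedding D.φ) :=
  fun s hs _ hus ↦ expEval_prod_eq_zero_of_jet_eq_zero (fun j ↦ (hs j).le)
    fun l hl ↦ hjet s hs l (hl.trans_lt hus)

lemma IsBound.norm_jet_le_of_vanishesOnBox (hD : D.IsBound c) (hM : 0 ≤ M)
    (hP : CoeffBounded N M fun b ↦ (P b).map (intEmbedding D.φ))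
    (hvan : VanishesOnBox (fun b ↦ intEmbedding D.φ ∘ D.weight N b) (intEmbedding D.φ ∘ D.form)
      D.point S n fun b ↦ (P b).map (intEmbedding D.φ))
    (hk : Fintype.card κ * k < n) (hSR : 2 * S ≤ R) {s : κ → ℕ} (hs : ∀ j, s j < S) {l : List τ}
    (hl : l.length = n) :
    ‖intEmbedding D.φ (D.jet N S s l P)‖ ≤
      c ^ (Fintype.card ι * Fintype.card κ * (N * S)) * (c ^ n * ((k + 1).factorial *
        ((4 * S / R) ^ (S * (k + 1)) * ((N : ℝ) ^ Fintype.card ι *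
          (N * (((Fintype.card ι + 1) * c * N) ^ (n - (k + 1)) * M) *
            (1 + (Fintype.card κ * S + R) * c) ^ N *
              Real.exp ((Fintype.card κ * S + R) * (Fintype.card ι * (N * c)))))))) := by
  have hc : 0 ≤ c := zero_le_one.trans hD.one_le
  have hR : 0 ≤ R := le_trans (by positivity) hSR
  rw [intEmbedding_jet_eq_expEval fun j ↦ (hs j).le, norm_mul, norm_pow, Complex.norm_natCast]
  gcongr
  · exact hD.den_le
  rw [← hl, ← List.length_map (as := l) (fun σ ↦ (Pi.single σ 1 : τ → ℂ))]
  refine norm_apply_prod_le_of_basis _ D.point _ hc (by positivity)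
    (List.forall_mem_map.2 fun σ _ ↦ hD.sum_norm_repr_le σ) fun js hjs ↦ ?_
  rw [List.length_map, hl] at hjs ⊢
  refine (hvan.norm_expEval_prod_le (c := c) hP
    (fun b j ↦ norm_weight_dotProduct_le D.φ (hD.freq_dotProduct_point_le · j) b)
    (fun j ↦ D.intEmbedding_formValue j ▸ hD.formValue_le D.φ j) hk hSR hs hjs).trans_eq ?_
  simp only [Fintype.card_fun, Fintype.card_fin, Nat.cast_pow]
  ring_nf

lemma one_add_pow_mul_exp_le {x c p a : ℝ} {N n : ℕ} (hx : 0 ≤ x) (hc : 0 ≤ c) (hp : 0 ≤ p)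
    (hxN : x * N ≤ a * n) :
    (1 + x * c) ^ N * Real.exp (x * (p * (N * c))) ≤ Real.exp ((p + 1) * c * a) ^ n := by
  calc (1 + x * c) ^ N * Real.exp (x * (p * (N * c)))
      ≤ Real.exp (x * c) ^ N * Real.exp (x * (p * (N * c))) := by
        gcongr
        linarith [Real.add_one_le_exp (x * c)]
    _ = Real.exp ((p + 1) * c * (x * N)) := by
        rw [← Real.exp_nat_mul, ← Real.exp_add]
        ring_nf
    _ ≤ Real.exp ((p + 1) * c * (a * n)) := by gcongr
    _ = Real.exp ((p + 1) * c * a) ^ n := by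
        rw [← Real.exp_nat_mul]
        ring_nf

lemma schwarz_bound_mul_pow_le {p d : ℕ} (hc : 1 ≤ c) (hM : 0 ≤ M) (hS : 1 ≤ S) (hN : 1 ≤ N)
    (hNn : N ≤ n) (hk : k < n) (hSR : 2 * S ≤ R) (hRN : R * N ≤ 2 * S * n) :
    c ^ (p * d * (N * S)) * (c ^ n * ((k + 1).factorial * ((4 * S / R) ^ (S * (k + 1)) *
      ((N : ℝ) ^ p * (N * (((p + 1) * c * N) ^ (n - (k + 1)) * M) * (1 + (d * S + R) * c) ^ N *
        Real.exp ((d * S + R) * (p * (N * c)))))))) * R ^ (S * (k + 1)) ≤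
      (c ^ (p * d * S) * c * (4 * S) ^ S * 2 ^ (p + 1) * ((p + 1) * c) *
        Real.exp ((p + 1) * c * (d * S + 2 * S)) * n ^ 2) ^ n * M := by
  have hN₁ : (1 : ℝ) ≤ N := by exact_mod_cast hN
  have hS₁ : (1 : ℝ) ≤ S := by exact_mod_cast hS
  have hR : 0 < R := by linarith
  have hN₂ : (N : ℝ) ≤ 2 ^ n := by exact_mod_cast hNn.trans Nat.lt_two_pow_self.le
  have hfactorial : ((k + 1).factorial : ℝ) ≤ n ^ n := by
    exact_mod_cast (Nat.factorial_le hk).trans n.factorial_le_pow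
  have hderiv : ((p + 1) * c * N) ^ (n - (k + 1)) ≤ ((p + 1) * c * n) ^ n := by
    have hpc : 1 ≤ (p + 1) * c * N := one_le_mul_of_one_le_of_one_le
      (one_le_mul_of_one_le_of_one_le (le_add_of_nonneg_left (by positivity)) hc) hN₁
    calc ((p + 1) * c * N) ^ (n - (k + 1)) ≤ ((p + 1) * c * N) ^ n :=
          pow_le_pow_right₀ hpc (Nat.sub_le _ _)
      _ ≤ ((p + 1) * c * n) ^ n := by gcongr
  have hexp : (1 + (d * S + R) * c) ^ N * Real.exp ((d * S + R) * (p * (N * c))) ≤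
      Real.exp ((p + 1) * c * (d * S + 2 * S)) ^ n := by
    refine one_add_pow_mul_exp_le (by positivity) (by positivity) (by positivity) ?_
    have : (d * S * N : ℝ) ≤ d * S * n := by gcongr
    linarith
  calc _ = c ^ (p * d * (N * S)) * c ^ n * (k + 1).factorial * (4 * S) ^ (S * (k + 1)) *
        ((N : ℝ) ^ p * N) * ((p + 1) * c * N) ^ (n - (k + 1)) *
          ((1 + (d * S + R) * c) ^ N * Real.exp ((d * S + R) * (p * (N * c)))) * M := by
        rw [div_pow]
        field_simp
    _ ≤ c ^ (p * d * (n * S)) * c ^ n * n ^ n * (4 * S) ^ (S * n) * ((2 ^ n) ^ p * 2 ^ n) *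
        ((p + 1) * c * n) ^ n * Real.exp ((p + 1) * c * (d * S + 2 * S)) ^ n * M := by
        gcongr
        · linarith
        · exact hk
    _ = _ := by
        simp only [mul_pow, ← pow_mul]
        ring_nf

lemma exists_norm_jet_mul_pow_le [NumberField K] [Nonempty κ] (D : ExpSystem K ι κ τ) (S : ℕ) :
    ∃ C : ℝ, 1 ≤ C ∧ ∀ (N n k : ℕ) (s : κ → ℕ) (l : List τ) (M R : ℝ)
      (P : (ι → Fin N) → (𝓞 K)[X]), 1 ≤ N → N ≤ n → Fintype.card κ * k < n → 2 * S ≤ R →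
      R * N ≤ 2 * S * n → (∀ j, s j < S) → l.length = n →
      CoeffBounded N M (fun b ↦ (P b).map (intEmbedding D.φ)) →
      (∀ s : κ → ℕ, (∀ j, s j < S) → ∀ l : List τ, l.length < n → D.jet N S s l P = 0) →
      ‖intEmbedding D.φ (D.jet N S s l P)‖ * R ^ (S * (k + 1)) ≤ (C * n ^ 2) ^ n * M := by
  obtain ⟨c, hD⟩ := D.exists_isBound
  have hc := hD.one_le
  obtain rfl | hS := S.eq_zero_or_pos
  · exact ⟨1, le_rfl, fun _ _ _ _ _ _ _ _ _ _ _ _ _ hs _ _ _ ↦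
      absurd (hs (Classical.arbitrary κ)) (Nat.not_lt_zero _)⟩
  have hS₁ : (1 : ℝ) ≤ S := by exact_mod_cast hS
  refine ⟨c ^ (Fintype.card ι * Fintype.card κ * S) * c * (4 * S) ^ S * 2 ^ (Fintype.card ι + 1) *
    ((Fintype.card ι + 1) * c) *
      Real.exp ((Fintype.card ι + 1) * c * (Fintype.card κ * S + 2 * S)), ?_,
    fun N n k s l M R P hN hNn hk hSR hRN hs hl hP hjet ↦ ?_⟩
  · have hexp := Real.one_le_exp
      (x := (Fintype.card ι + 1) * c * (Fintype.card κ * S + 2 * S)) (by positivity)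
    have hpow : (1 : ℝ) ≤ (4 * S) ^ S := one_le_pow₀ (by linarith)
    have hcard : (1 : ℝ) ≤ Fintype.card ι + 1 := le_add_of_nonneg_left (by positivity)
    have htwo : (1 : ℝ) ≤ 2 ^ (Fintype.card ι + 1) := one_le_pow₀ one_le_two
    have hcpow := one_le_pow₀ hc (n := Fintype.card ι * Fintype.card κ * S)
    refine one_le_mul_of_one_le_of_one_le ?_ hexp
    refine one_le_mul_of_one_le_of_one_le ?_ (one_le_mul_of_one_le_of_one_le hcard hc)
    refine one_le_mul_of_one_le_of_one_le ?_ htwo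
    exact one_le_mul_of_one_le_of_one_le (one_le_mul_of_one_le_of_one_le hcpow hc) hpow
  · have : NeZero N := ⟨by omega⟩
    have hM : 0 ≤ M := hP.nonneg
    have hkn : k < n := (Nat.le_mul_of_pos_left k Fintype.card_pos).trans_lt hk
    refine le_trans ?_ (schwarz_bound_mul_pow_le hc hM hS hN hNn hkn hSR hRN)
    have hR : 0 ≤ R := le_trans (by positivity) hSR
    gcongr
    exact hD.norm_jet_le_of_vanishesOnBox hM hP (vanishesOnBox_of_jet_eq_zero hjet) hk hSR hs hl

end Vanishing

end ExpSystem

/-! ### The auxiliary function -/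

/-- A list in which each `σ` occurs `t σ` times. -/
noncomputable def listOfCounts {τ : Type*} [Fintype τ] (t : τ → ℕ) : List τ :=
  (∑ σ, t σ • ({σ} : Multiset τ)).toList

lemma length_listOfCounts {τ : Type*} [Fintype τ] (t : τ → ℕ) :
    (listOfCounts t).length = ∑ σ, t σ := by
  simp [listOfCounts]

lemma perm_listOfCounts_count {τ : Type*} [Fintype τ] [DecidableEq τ] (l : List τ) :
    l.Perm (listOfCounts fun σ ↦ l.count σ) := by
  rw [← Multiset.coe_eq_coe, listOfCounts, Multiset.coe_toList]
  ext σ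
  simp [Multiset.count_sum', Multiset.count_singleton]

section

variable {R B : Type*} [CommRing R] (N : ℕ)

open Classical in
/-- The family of polynomials of degree `< N` with the given coefficients. -/
noncomputable def polyOfCoeffs : (B × Fin N → R) →ₗ[R] B → R[X] :=
  LinearMap.pi fun b ↦ ofFn N ∘ₗ LinearMap.funLeft R R (Prod.mk b)

variable {N}

lemma coeff_polyOfCoeffs (ξ : B × Fin N → R) (b : B) (i : ℕ) :
    (polyOfCoeffs N ξ b).coeff i = if h : i < N then ξ (b, ⟨i, h⟩) else 0 := by
  classical
  split_ifs with h
  · exact ofFn_coeff_eq_val_of_lt (LinearMap.funLeft R R (Prod.mk b) ξ) h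
  · exact ofFn_coeff_eq_zero_of_ge (LinearMap.funLeft R R (Prod.mk b) ξ) (not_lt.1 h)

lemma polyOfCoeffs_injective : Function.Injective (polyOfCoeffs N : (B × Fin N → R) →ₗ[R] _) := by
  intro ξ ξ' h
  funext ⟨b, i⟩
  simpa [coeff_polyOfCoeffs] using congrArg (fun P ↦ (P b).coeff i) h

lemma coeffBounded_map_polyOfCoeffs (ψ : R →+* ℂ) {M : ℝ} (hM : 0 ≤ M) {ξ : B × Fin N → R}
    (hξ : ∀ l, ‖ψ (ξ l)‖ ≤ M) :
    CoeffBounded N M fun b ↦ (polyOfCoeffs N ξ b).map ψ where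
  norm_coeff_le b i := by
    rw [coeff_map, coeff_polyOfCoeffs]
    split_ifs with h
    · exact hξ _
    · simpa using hM
  coeff_eq_zero b i hi := by rw [coeff_map, coeff_polyOfCoeffs, dif_neg hi.not_gt, map_zero]

end

namespace ExpSystem

variable {K ι κ τ : Type*} [Field K] [Fintype ι] [Fintype κ] [Fintype τ]
  [DecidableEq ι] [DecidableEq τ]

/-- The linear system, in the coefficients of an exponential polynomial, expressing that its partial
derivatives of order `< T` in each variable vanish at the lattice points with coordinates `< S`. -/
noncomputable def jetSystem (D : ExpSystem K ι κ τ) (N S T : ℕ) :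
    ((ι → Fin N) × Fin N → 𝓞 K) →ₗ[𝓞 K] ((κ → Fin S) × (τ → Fin T) → 𝓞 K) :=
  LinearMap.pi fun st ↦
    D.jet N S (fun j ↦ st.1 j) (listOfCounts fun σ ↦ st.2 σ) ∘ₗ polyOfCoeffs N

lemma jet_polyOfCoeffs_eq_zero {D : ExpSystem K ι κ τ} {N S T : ℕ}
    {ξ : (ι → Fin N) × Fin N → 𝓞 K} (hξ : D.jetSystem N S T ξ = 0) {s : κ → ℕ}
    (hs : ∀ j, s j < S) {l : List τ} (hl : l.length < T) :
    D.jet N S s l (polyOfCoeffs N ξ) = 0 := by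
  rw [jet_eq_of_perm (perm_listOfCounts_count l)]
  exact congrFun hξ (fun j ↦ ⟨s j, hs j⟩, fun σ ↦ ⟨l.count σ, List.count_le_length.trans_lt hl⟩)

lemma exists_norm_jetSystem_single_le [NumberField K] (D : ExpSystem K ι κ τ) (S : ℕ) :
    ∃ C : ℝ, 1 ≤ C ∧ ∀ (N T : ℕ) st l (ψ : K →+* ℂ), 1 ≤ N → N ≤ T →
      ‖intEmbedding ψ (D.jetSystem N S T (Pi.single l 1) st)‖ ≤
        (C * T ^ Fintype.card τ) ^ T := by
  obtain ⟨C, hC, hjet⟩ := D.exists_norm_jet_le S (Fintype.card τ)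
  refine ⟨C, hC, fun N T st l ψ hN hNT ↦ ?_⟩
  have hlen : (listOfCounts fun σ ↦ (st.2 σ : ℕ)).length ≤ Fintype.card τ * T := by
    rw [length_listOfCounts, ← smul_eq_mul, ← Finset.card_univ]
    exact Finset.sum_le_card_nsmul _ _ _ fun σ _ ↦ (st.2 σ).2.le
  have hsingle (l') : ‖intEmbedding ψ ((Pi.single l 1 : (ι → Fin N) × Fin N → 𝓞 K) l')‖ ≤ 1 := by
    by_cases h : l' = l <;> simp [h]
  exact (hjet N T ψ _ _ 1 _ hN hNT (fun j ↦ (st.1 j).2.le) hlen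
    (coeffBounded_map_polyOfCoeffs _ zero_le_one hsingle)).trans_eq (mul_one _)

lemma exists_ne_zero_jet_eq_zero [NumberField K] (D : ExpSystem K ι κ τ) {S : ℕ} (hS : 1 ≤ S) :
    ∃ C : ℝ, 1 ≤ C ∧ ∀ N T : ℕ, 1 ≤ N → N ≤ T →
      2 * (S ^ Fintype.card κ * T ^ Fintype.card τ) ≤ N ^ (Fintype.card ι + 1) →
      ∃ P : (ι → Fin N) → (𝓞 K)[X], P ≠ 0 ∧
        (∀ ψ : K →+* ℂ, CoeffBounded N ((C * T ^ Fintype.card τ) ^ T)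
          fun b ↦ (P b).map (intEmbedding ψ)) ∧
        ∀ s : κ → ℕ, (∀ j, s j < S) → ∀ l : List τ, l.length < T → D.jet N S s l P = 0 := by
  classical
  obtain ⟨c, hc, hsiegel⟩ := exists_ne_zero_apply_eq_zero_norm_le K
  obtain ⟨C, hC, hentry⟩ := D.exists_norm_jetSystem_single_le S
  refine ⟨c * c * 2 ^ (Fintype.card ι + 1) * C, ?_, fun N T hN hNT hcard ↦ ?_⟩
  · exact one_le_mul_of_one_le_of_one_le (one_le_mul_of_one_le_of_one_le
      (one_le_mul_of_one_le_of_one_le hc hc) (one_le_pow₀ one_le_two)) hC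
  have hT : 1 ≤ T := hN.trans hNT
  have hT₁ : (1 : ℝ) ≤ T := by exact_mod_cast hT
  obtain ⟨ξ, hξ₀, hξ, hξ_le⟩ := hsiegel _ _ (D.jetSystem N S T) ((C * T ^ Fintype.card τ) ^ T)
    (one_le_pow₀ (one_le_mul_of_one_le_of_one_le hC (one_le_pow₀ hT₁)))
    (by simpa [Fintype.card_prod, Fintype.card_fun] using
      Nat.mul_pos (Nat.pow_pos hS) (Nat.pow_pos hT))
    (by simpa [Fintype.card_prod, Fintype.card_fun, pow_succ] using hcard)
    fun st l ψ ↦ hentry N T st l ψ hN hNT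
  refine ⟨polyOfCoeffs N ξ, (map_ne_zero_iff _ polyOfCoeffs_injective).2 hξ₀,
    fun ψ ↦ coeffBounded_map_polyOfCoeffs _ (by positivity) fun l ↦ (hξ_le l ψ).trans ?_,
    fun s hs l hl ↦ jet_polyOfCoeffs_eq_zero hξ hs hl⟩
  have hN₂ : (N : ℝ) ≤ 2 ^ T := by exact_mod_cast hNT.trans Nat.lt_two_pow_self.le
  calc c * (c * (Fintype.card ((ι → Fin N) × Fin N) * (C * T ^ Fintype.card τ) ^ T))
      = c * c * (N : ℝ) ^ (Fintype.card ι + 1) * (C * T ^ Fintype.card τ) ^ T := by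
        simp only [Fintype.card_prod, Fintype.card_fun, Fintype.card_fin]
        push_cast
        ring
    _ ≤ (c * c) ^ T * (2 ^ T) ^ (Fintype.card ι + 1) * (C * T ^ Fintype.card τ) ^ T := by
        gcongr
        exact le_self_pow₀ (one_le_mul_of_one_le_of_one_le hc hc) (by omega)
    _ = (c * c * 2 ^ (Fintype.card ι + 1) * C * T ^ Fintype.card τ) ^ T := by
        rw [pow_right_comm]
        simp only [← mul_pow, mul_assoc]

end ExpSystem

lemma exists_forall_dotProduct_ne_zero {F α τ : Type*} [Field F] [Infinite F] [Finite α]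
    [Fintype τ] {f : α → τ → F} (hf : ∀ a, f a ≠ 0) : ∃ v, ∀ a, f a ⬝ᵥ v ≠ 0 := by
  classical
  refine Module.Dual.exists_forall_ne_zero_of_forall_exists (fun a ↦ dotProductEquiv F τ (f a))
    fun a ↦ ?_
  by_contra! hzero
  exact hf a (dotProduct_eq_zero _ hzero)

lemma exists_dotProduct_ne_zero_and_injective {F B τ : Type*} [Field F] [Infinite F] [Finite B]
    [Fintype τ] {m : τ → F} (hm : m ≠ 0) {w : B → τ → F} (hw : Function.Injective w) :
    ∃ v, m ⬝ᵥ v ≠ 0 ∧ Function.Injective fun b ↦ w b ⬝ᵥ v := by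
  let f (a : Option {bb : B × B // bb.1 ≠ bb.2}) : τ → F :=
    a.elim m fun bb ↦ w bb.1.1 - w bb.1.2
  obtain ⟨v, hv⟩ := exists_forall_dotProduct_ne_zero (f := f) <| Option.forall.2
    ⟨hm, fun bb ↦ sub_ne_zero.2 (hw.ne bb.2)⟩
  refine ⟨v, hv none, fun b b' h ↦ ?_⟩
  by_contra hne
  exact hv (some ⟨(b, b'), hne⟩) (by simpa [f, sub_dotProduct, sub_eq_zero] using h)

namespace ExpSystem

variable {K ι κ τ : Type*} [Field K] [Fintype ι] [Fintype τ] {D : ExpSystem K ι κ τ} {N : ℕ}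

lemma weight_injective (hfreq : LinearIndependent ℤ D.freq) :
    Function.Injective (D.weight N) := by
  intro b b' h
  have hsum : ∑ i, ((b i : ℤ) - b' i) • D.freq i = 0 := by
    simpa [weight, sub_smul, sub_eq_zero] using h
  funext i
  have := Fintype.linearIndependent_iff.1 hfreq _ hsum i
  exact Fin.ext (by omega)

lemma exists_jet_ne_zero [Fintype κ] [DecidableEq ι] [DecidableEq τ]
    (hfreq : LinearIndependent ℤ D.freq) (hform : D.form ≠ 0) {S : ℕ} {s : κ → ℕ}
    (hs : ∀ j, s j ≤ S) {P : (ι → Fin N) → (𝓞 K)[X]} (hP : P ≠ 0) :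
    ∃ l : List τ, D.jet N S s l P ≠ 0 := by
  by_contra! hjet
  have hinj := intEmbedding_injective D.φ
  obtain ⟨v, hmv, hwv⟩ := exists_dotProduct_ne_zero_and_injective
    (m := intEmbedding D.φ ∘ D.form) (w := fun b ↦ intEmbedding D.φ ∘ D.weight N b)
    (fun h ↦ hform (hinj.comp_left (h.trans (funext fun _ ↦ (map_zero _).symm))))
    (hinj.comp_left.comp (weight_injective hfreq))
  have hmap : (fun b ↦ (P b).map (intEmbedding D.φ)) ≠ 0 := fun h ↦ hP <| funext fun b ↦
    map_injective _ hinj ((congrFun h b).trans (Polynomial.map_zero _).symm)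
  obtain ⟨n, hn⟩ := exists_evalAt_dirDeriv_pow_ne_zero hwv hmv
    ((intEmbedding D.φ ∘ D.form) ⬝ᵥ latticePoint D.point s)
    (fun b ↦ Complex.exp_ne_zero ((intEmbedding D.φ ∘ D.weight N b) ⬝ᵥ latticePoint D.point s)) hmap
  refine hn ?_
  rw [← List.prod_replicate, ← List.map_replicate]
  exact expEval_prod_eq_zero_of_jet_eq_zero hs fun l _ ↦ hjet l

end ExpSystem

/-! ### The transcendence criterion -/

lemma le_pow_of_pow_le_mul_pow {R C : ℝ} {d e k n : ℕ} (hR : 1 ≤ R) (hC : 1 ≤ C)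
    (hn : n ≤ R ^ (d + 1)) (hk : n ≤ d * (k + 1))
    (h : R ^ ((e * d * (d + 1) + 1) * (k + 1)) ≤ (C * n ^ e) ^ n) : R ≤ C ^ d := by
  have hR₀ : 0 < R := by linarith
  have hpow : ((n : ℝ) ^ e) ^ n ≤ R ^ (e * d * (d + 1) * (k + 1)) :=
    calc ((n : ℝ) ^ e) ^ n ≤ ((R ^ (d + 1)) ^ e) ^ n := by gcongr
      _ ≤ ((R ^ (d + 1)) ^ e) ^ (d * (k + 1)) :=
        pow_le_pow_right₀ (one_le_pow₀ (one_le_pow₀ hR)) hk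
      _ = R ^ (e * d * (d + 1) * (k + 1)) := by
        simp only [← pow_mul]
        ring_nf
  refine le_of_pow_le_pow_left₀ k.succ_ne_zero (by positivity) ?_
  refine le_of_mul_le_mul_right ?_ (pow_pos hR₀ (e * d * (d + 1) * (k + 1)))
  calc R ^ (k + 1) * R ^ (e * d * (d + 1) * (k + 1))
      = R ^ ((e * d * (d + 1) + 1) * (k + 1)) := by ring
    _ ≤ C ^ n * ((n : ℝ) ^ e) ^ n := by rwa [← mul_pow]
    _ ≤ C ^ (d * (k + 1)) * R ^ (e * d * (d + 1) * (k + 1)) := by gcongr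
    _ = (C ^ d) ^ (k + 1) * R ^ (e * d * (d + 1) * (k + 1)) := by rw [pow_mul]

lemma le_div_pow_pow {L n : ℝ} {d : ℕ} (hL : 0 < L) (hn : L ^ (d + 1) ≤ n) :
    n ≤ (n / L ^ d) ^ (d + 1) := by
  have hn₀ : 0 < n := (pow_pos hL _).trans_le hn
  rw [div_pow, le_div_iff₀ (by positivity)]
  calc n * (L ^ d) ^ (d + 1) = n * (L ^ (d + 1)) ^ d := by ring
    _ ≤ n * n ^ d := by gcongr
    _ = n ^ (d + 1) := by ring

lemma mul_pow_mul_pow_le {C C' : ℝ} {d h n T : ℕ} (hC : 1 ≤ C) (hC' : 1 ≤ C') (hT : 1 ≤ T)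
    (hTn : T ≤ n) :
    (C * n ^ (2 + h)) ^ n * ((C' * T ^ d) ^ T) ^ (1 + h) ≤
      (C * C' ^ (1 + h) * n ^ (2 + h + d * (1 + h))) ^ n := by
  have hT₁ : (1 : ℝ) ≤ T := by exact_mod_cast hT
  calc (C * n ^ (2 + h)) ^ n * ((C' * T ^ d) ^ T) ^ (1 + h)
      ≤ (C * n ^ (2 + h)) ^ n * ((C' * n ^ d) ^ n) ^ (1 + h) := by
        gcongr ?_ * ?_ ^ (1 + h)
        calc (C' * (T : ℝ) ^ d) ^ T ≤ (C' * (T : ℝ) ^ d) ^ n :=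
              pow_le_pow_right₀ (one_le_mul_of_one_le_of_one_le hC' (one_le_pow₀ hT₁)) hTn
          _ ≤ (C' * (n : ℝ) ^ d) ^ n := by gcongr
    _ = _ := by
        simp only [mul_pow, ← pow_mul]
        ring

lemma two_mul_pow_mul_pow_le {S L d p : ℕ} (hS : 1 ≤ S) (hL : 1 ≤ L) (hdp : d ≤ p) :
    2 * (S ^ d * (L ^ (d + 1)) ^ d) ≤ (2 * S * L ^ d) ^ (p + 1) :=
  calc 2 * (S ^ d * (L ^ (d + 1)) ^ d) = 1 * (2 * S ^ d) * (L ^ (d + 1)) ^ d := by ring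
    _ ≤ S * (2 ^ (d + 1) * S ^ d) * (L ^ (d + 1)) ^ d := by
      gcongr
      exact Nat.le_self_pow d.succ_ne_zero 2
    _ = (2 * S * L ^ d) ^ (d + 1) := by ring
    _ ≤ (2 * S * L ^ d) ^ (p + 1) := by
      gcongr
      exact Nat.mul_pos (by omega) (Nat.pow_pos hL)

namespace ExpSystem

variable {K ι κ τ : Type*} [Field K] [Fintype ι] [Fintype τ]

section

variable [Fintype κ] [DecidableEq ι] [DecidableEq τ]

lemma exists_pow_le_of_jet_ne_zero [NumberField K] [Nonempty κ] (D : ExpSystem K ι κ τ) (S : ℕ) :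
    ∃ C : ℝ, 1 ≤ C ∧ ∀ (N n k : ℕ) (s : κ → ℕ) (l : List τ) (M R : ℝ)
      (P : (ι → Fin N) → (𝓞 K)[X]), 1 ≤ N → N ≤ n → Fintype.card κ * k < n → 2 * S ≤ R →
      R * N ≤ 2 * S * n → (∀ j, s j < S) → l.length = n → 1 ≤ M →
      (∀ ψ : K →+* ℂ, CoeffBounded N M fun b ↦ (P b).map (intEmbedding ψ)) →
      (∀ s : κ → ℕ, (∀ j, s j < S) → ∀ l : List τ, l.length < n → D.jet N S s l P = 0) →
      D.jet N S s l P ≠ 0 →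
      R ^ (S * (k + 1)) ≤
        (C * n ^ (2 + Module.finrank ℚ K)) ^ n * M ^ (1 + Module.finrank ℚ K) := by
  obtain ⟨C₁, hC₁, hupper⟩ := D.exists_norm_jet_mul_pow_le S
  obtain ⟨C₂, hC₂, hheight⟩ := D.exists_norm_jet_le S 1
  refine ⟨C₁ * C₂ ^ Module.finrank ℚ K, one_le_mul_of_one_le_of_one_le hC₁ (one_le_pow₀ hC₂),
    fun N n k s l M R P hN hNn hk hSR hRN hs hl hM hP hvan hne ↦ ?_⟩
  have hn : (1 : ℝ) ≤ n := by exact_mod_cast hN.trans hNn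
  have hR : 0 ≤ R := le_trans (by positivity) hSR
  set H := (C₂ * n ^ 1) ^ n * M with hH
  have hH₁ : 1 ≤ H := one_le_mul_of_one_le_of_one_le
    (one_le_pow₀ (one_le_mul_of_one_le_of_one_le hC₂ (one_le_pow₀ hn))) hM
  have hliouville := one_le_norm_mul_pow_finrank hne D.φ hH₁ fun ψ ↦
    hheight N n ψ s l M P hN hNn (fun j ↦ (hs j).le) (by omega) (hP ψ)
  calc R ^ (S * (k + 1))
      ≤ ‖intEmbedding D.φ (D.jet N S s l P)‖ * H ^ Module.finrank ℚ K * R ^ (S * (k + 1)) :=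
        le_mul_of_one_le_left (by positivity) hliouville
    _ = ‖intEmbedding D.φ (D.jet N S s l P)‖ * R ^ (S * (k + 1)) * H ^ Module.finrank ℚ K := by
        ring
    _ ≤ (C₁ * n ^ 2) ^ n * M * H ^ Module.finrank ℚ K := by
        refine mul_le_mul_of_nonneg_right ?_ (by positivity)
        exact hupper N n k s l M R P hN hNn hk hSR hRN hs hl (hP D.φ) hvan
    _ = _ := by
        rw [hH]
        simp only [mul_pow, ← pow_mul]
        ring

lemma exists_minimal_jet_ne_zero {D : ExpSystem K ι κ τ} (hfreq : LinearIndependent ℤ D.freq)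
    (hform : D.form ≠ 0) {N S : ℕ} (hS : 1 ≤ S) {P : (ι → Fin N) → (𝓞 K)[X]} (hP : P ≠ 0) :
    ∃ (s : κ → ℕ) (l : List τ), (∀ j, s j < S) ∧ D.jet N S s l P ≠ 0 ∧
      ∀ s : κ → ℕ, (∀ j, s j < S) → ∀ l' : List τ, l'.length < l.length →
        D.jet N S s l' P = 0 := by
  classical
  have hex : ∃ (n : ℕ) (s : κ → ℕ) (l : List τ),
      (∀ j, s j < S) ∧ l.length = n ∧ D.jet N S s l P ≠ 0 := by
    obtain ⟨l, hl⟩ := exists_jet_ne_zero hfreq hform (s := 0) (fun _ ↦ S.zero_le) hP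
    exact ⟨l.length, 0, l, fun _ ↦ hS, rfl, hl⟩
  obtain ⟨s, l, hs, hl, hne⟩ := Nat.find_spec hex
  refine ⟨s, l, hs, hne, fun s' hs' l' hl' ↦ ?_⟩
  by_contra hne'
  exact Nat.find_min hex (hl ▸ hl') ⟨s', l', hs', rfl, hne'⟩

end

lemma exists_pow_le_of_linearIndependent_freq [NumberField K] [Fintype κ] [Nonempty κ]
    (D : ExpSystem K ι κ τ) (hfreq : LinearIndependent ℤ D.freq) (hform : D.form ≠ 0) {d h S : ℕ}
    (hκ : Fintype.card κ = d) (hτ : Fintype.card τ = d) (hι : d ≤ Fintype.card ι)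
    (hK : Module.finrank ℚ K = h) (hS : 1 ≤ S) :
    ∃ C : ℝ, 1 ≤ C ∧ ∀ L : ℕ, 2 * S ≤ L → ∃ (R : ℝ) (n k : ℕ), L ≤ R ∧ n ≤ R ^ (d + 1) ∧
      n ≤ d * (k + 1) ∧ R ^ (S * (k + 1)) ≤ (C * n ^ (2 + h + d * (1 + h))) ^ n := by
  classical
  obtain ⟨C, hC, hextrapolate⟩ := D.exists_pow_le_of_jet_ne_zero S
  obtain ⟨C', hC', haux⟩ := D.exists_ne_zero_jet_eq_zero hS
  rw [hκ, hK] at hextrapolate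
  rw [hκ, hτ] at haux
  refine ⟨C * C' ^ (1 + h),
    one_le_mul_of_one_le_of_one_le hC (one_le_pow₀ hC'), fun L hL ↦ ?_⟩
  have hL₀ : 0 < L := by omega
  have hN : 1 ≤ 2 * S * L ^ d := Nat.mul_pos (by omega) (Nat.pow_pos hL₀)
  have hNT : 2 * S * L ^ d ≤ L ^ (d + 1) := by
    rw [pow_succ']
    gcongr
  obtain ⟨P, hP₀, hP, hvanT⟩ := haux (2 * S * L ^ d) (L ^ (d + 1)) hN hNT
    (two_mul_pow_mul_pow_le hS hL₀ hι)
  obtain ⟨s, l, hs, hne, hvan⟩ := exists_minimal_jet_ne_zero hfreq hform hS hP₀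
  set n := l.length
  have hTn : L ^ (d + 1) ≤ n := not_lt.1 fun hn ↦ hne (hvanT s hs l hn)
  have hn : 1 ≤ n := (Nat.pow_pos hL₀).trans_le hTn
  have hLn : (L : ℝ) ^ (d + 1) ≤ n := by exact_mod_cast hTn
  have hLR : (L : ℝ) ≤ n / L ^ d := by
    rwa [le_div_iff₀ (by positivity), ← pow_succ']
  have hT₁ : (1 : ℝ) ≤ (L ^ (d + 1) : ℕ) := by exact_mod_cast Nat.pow_pos hL₀
  have hd : 0 < d := hκ ▸ Fintype.card_pos
  refine ⟨n / L ^ d, n, (n - 1) / d, hLR, le_div_pow_pow (by positivity) hLn, ?_,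
    (hextrapolate _ n _ s l _ _ P hN (hNT.trans hTn) ?_ ?_ ?_ hs rfl ?_ hP hvan hne).trans
      (mul_pow_mul_pow_le hC hC' (Nat.pow_pos hL₀) hTn)⟩
  · have := Nat.lt_mul_div_succ (n - 1) hd
    omega
  · have := Nat.mul_div_le (n - 1) d
    omega
  · exact le_trans (by exact_mod_cast hL) hLR
  · push_cast
    field_simp
    rfl
  · exact one_le_pow₀ (one_le_mul_of_one_le_of_one_le hC' (one_le_pow₀ hT₁))

theorem card_lt_of_linearIndependent_freq [NumberField K] (D : ExpSystem K ι κ τ)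
    (hfreq : LinearIndependent ℤ D.freq) (hform : D.form ≠ 0) :
    Fintype.card ι < Fintype.card τ := by
  classical
  by_contra! hcard
  have : Fintype κ := FiniteDimensional.fintypeBasisIndex D.point
  have hκτ : Fintype.card κ = Fintype.card τ := by
    rw [← Module.finrank_eq_card_basis D.point, Module.finrank_fintype_fun_eq_card]
  obtain ⟨σ, -⟩ := Function.ne_iff.1 hform
  have : Nonempty κ := Fintype.card_pos_iff.1 (hκτ ▸ Fintype.card_pos_iff.2 ⟨σ⟩)
  set d := Fintype.card τ
  set e := 2 + Module.finrank ℚ K + d * (1 + Module.finrank ℚ K)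
  -- The summand `1` leaves a factor `R ^ (k + 1)` that the bound `(C * n ^ e) ^ n` cannot absorb.
  obtain ⟨C, hC, hbound⟩ := D.exists_pow_le_of_linearIndependent_freq hfreq hform hκτ rfl hcard rfl
    (S := e * d * (d + 1) + 1) (Nat.le_add_left _ _)
  obtain ⟨L, hL⟩ := exists_nat_gt (C ^ d)
  obtain ⟨R, n, k, hLR, hnR, hnk, hR⟩ :=
    hbound (max L (2 * (e * d * (d + 1) + 1))) (le_max_right _ _)
  have hLR' : (L : ℝ) ≤ R := le_trans (by exact_mod_cast le_max_left _ _) hLR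
  have hR₁ : 1 ≤ R := (one_le_pow₀ hC).trans (hL.le.trans hLR')
  exact (hL.trans_le hLR').not_ge (le_pow_of_pow_le_mul_pow hR₁ hC hnR hnk hR)

end ExpSystem

/-! ### Conjugates of a linear form in logarithms -/

open Module

lemma exists_apply_eq_exp_sum {K ν : Type*} [Field K] [Fintype ν] (φ : K →+* ℂ) {a : ν → K}
    {lam : ν → ℂ} (ha : ∀ k, Complex.exp (lam k) = φ (a k)) (t : ν → ℤ) :
    ∃ x : K, φ x = Complex.exp (∑ k, (t k : ℂ) * lam k) := by
  refine ⟨∏ k, a k ^ t k, ?_⟩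
  simp only [map_prod, map_zpow₀, ← ha, Complex.exp_sum, Complex.exp_int_mul]

section

variable {K : Type*} [Field K] [NumberField K] [IsGalois ℚ K] (φ : K →+* ℂ)
  {ν : Type*} [Fintype ν] (b : ν → 𝓞 K) (lam : ν → ℂ)

/-- The conjugate by `σ` of the linear form with coefficients `b`, evaluated at `lam`. -/
noncomputable def conjForm (σ : Gal(K/ℚ)) : ℂ := ∑ k, φ (σ (b k)) * lam k

lemma sum_mul_conjForm (z : K) :
    ∑ σ : Gal(K/ℚ), φ (σ z) * conjForm φ b lam σ =
      ∑ k, (Algebra.trace ℚ K (z * b k) : ℂ) * lam k := by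
  have htrace (k : ν) :
      (Algebra.trace ℚ K (z * b k) : ℂ) = ∑ σ : Gal(K/ℚ), φ (σ z) * φ (σ (b k)) := by
    simpa using congrArg φ (trace_eq_sum_automorphisms (K := ℚ) (z * b k))
  simp only [conjForm, htrace, Finset.mul_sum, Finset.sum_mul, mul_assoc]
  exact Finset.sum_comm

variable {b lam}

lemma exists_conjForm_ne_zero (hlam : LinearIndependent ℚ lam) (hb : b ≠ 0) :
    ∃ σ : Gal(K/ℚ), conjForm φ b lam σ ≠ 0 := by
  obtain ⟨k, hk⟩ := Function.ne_iff.1 hb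
  by_contra! hzero
  have htrace := sum_mul_conjForm φ b lam (b k : K)⁻¹
  simp only [hzero, mul_zero, Finset.sum_const_zero] at htrace
  have htrace_one : Algebra.trace ℚ K ((b k : K)⁻¹ * b k) = 0 :=
    Fintype.linearIndependent_iff.1 hlam (fun l ↦ Algebra.trace ℚ K ((b k : K)⁻¹ * b l))
      (by simpa [Algebra.smul_def] using htrace.symm) k
  rw [inv_mul_cancel₀ (by simpa using hk), ← map_one (algebraMap ℚ K),
    Algebra.trace_algebraMap] at htrace_one
  simp [finrank_pos.ne'] at htrace_one

end

section

variable {K : Type*} [Field K] [NumberField K]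

lemma bijective_comp_gal [IsGalois ℚ K] (φ : K →+* ℂ) :
    Function.Bijective fun σ : Gal(K/ℚ) ↦ φ.comp (σ : K →+* K) := by
  rw [Fintype.bijective_iff_injective_and_card]
  refine ⟨fun σ σ' h ↦ AlgEquiv.ext fun x ↦ φ.injective (RingHom.congr_fun h x), ?_⟩
  rw [Embeddings.card, ← Nat.card_eq_fintype_card, IsGalois.card_aut_eq_finrank]

/-- The conjugates of an integral basis, scaled by `μ`, as a basis of `ℂ ^ [K : ℚ]`: the points of
the exponential system attached to a linear form in logarithms. -/
noncomputable def conjBasis [IsGalois ℚ K] (φ : K →+* ℂ) {μ : Gal(K/ℚ) → ℂ} (hμ : ∀ σ, μ σ ≠ 0) :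
    Basis (Free.ChooseBasisIndex ℤ (𝓞 K)) ℂ (Gal(K/ℚ) → ℂ) :=
  (canonicalEmbedding.latticeBasis K).map <|
    LinearEquiv.funCongrLeft ℂ ℂ (Equiv.ofBijective _ (bijective_comp_gal φ)) ≪≫ₗ
      LinearEquiv.piCongrRight fun σ ↦ LinearEquiv.smulOfNeZero ℂ ℂ (μ σ) (hμ σ)

lemma conjBasis_apply [IsGalois ℚ K] (φ : K →+* ℂ) {μ : Gal(K/ℚ) → ℂ} (hμ : ∀ σ, μ σ ≠ 0) (j σ) :
    conjBasis φ hμ j σ = μ σ * φ (σ (RingOfIntegers.basis K j)) := by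
  simp [conjBasis, canonicalEmbedding.latticeBasis_apply, integralBasis_apply,
    canonicalEmbedding.apply_at]

/-- The conjugates of an integral basis, scaled by `ε`: the frequencies of the exponential system
attached to a linear form in logarithms. -/
noncomputable def conjFreq (ε : Gal(K/ℚ) → 𝓞 K) (i : Free.ChooseBasisIndex ℤ (𝓞 K))
    (σ : Gal(K/ℚ)) : 𝓞 K :=
  ε σ * RingOfIntegers.mapRingHom (σ : K →+* K) (RingOfIntegers.basis K i)

lemma linearIndependent_conjFreq {ε : Gal(K/ℚ) → 𝓞 K} {σ : Gal(K/ℚ)} (hε : ε σ ≠ 0) :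
    LinearIndependent ℤ (conjFreq ε) := by
  let f : 𝓞 K →ₗ[ℤ] 𝓞 K := (AddMonoidHom.mulLeft (ε σ)).toIntLinearMap ∘ₗ
    (RingOfIntegers.mapRingHom (σ : K →+* K)).toAddMonoidHom.toIntLinearMap
  refine LinearIndependent.of_comp (LinearMap.proj σ) ?_
  refine (RingOfIntegers.basis K).linearIndependent.map' f (LinearMap.ker_eq_bot.2 ?_)
  refine (mul_right_injective₀ hε).comp fun x y h ↦ ?_
  exact RingOfIntegers.ext (σ.injective (congrArg Subtype.val h))

end

/-! ### Reduction of Baker's theorem to the criterion -/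

lemma exists_mul_eq_of_apply_eq {G R F : Type*} [Semiring R] [Field F] (f : R →+* F) {Λ : G → F}
    {g : G} {r : R} (hg : Λ g = f r) :
    ∃ (ε : G → R) (μ : G → F), (∀ σ, μ σ ≠ 0) ∧ μ g = 1 ∧ ∀ σ, f (ε σ) * μ σ = Λ σ := by
  classical
  refine ⟨Function.update (fun σ ↦ if Λ σ = 0 then 0 else 1) g r,
    Function.update (fun σ ↦ if Λ σ = 0 then 1 else Λ σ) g 1, fun σ ↦ ?_,
    Function.update_self .., fun σ ↦ ?_⟩ <;>
  obtain rfl | hσ := eq_or_ne σ g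
  · simp
  · by_cases h : Λ σ = 0 <;> simp [hσ, h]
  · simp [hg]
  · by_cases h : Λ σ = 0 <;> simp [hσ, h]

section

variable {K : Type*} [Field K] [NumberField K] [IsGalois ℚ K] (φ : K →+* ℂ)
  {ν : Type*} [Fintype ν] {a : ν → K} {b : ν → 𝓞 K} {lam : ν → ℂ}

lemma conjFreq_dotProduct_conjBasis {ε : Gal(K/ℚ) → 𝓞 K} {μ : Gal(K/ℚ) → ℂ} (hμ : ∀ σ, μ σ ≠ 0)
    (hεμ : ∀ σ, intEmbedding φ (ε σ) * μ σ = conjForm φ b lam σ) (i j) :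
    (intEmbedding φ ∘ conjFreq ε i) ⬝ᵥ conjBasis φ hμ j =
      ∑ k, (Algebra.trace ℤ (𝓞 K)
        (RingOfIntegers.basis K i * RingOfIntegers.basis K j * b k) : ℂ) * lam k := by
  set x := RingOfIntegers.basis K i
  set y := RingOfIntegers.basis K j
  have htrace (k : ν) : (Algebra.trace ℤ (𝓞 K) (x * y * b k) : ℂ) =
      (Algebra.trace ℚ K ((x * y : K) * b k) : ℂ) := by
    simpa using congrArg (fun q : ℚ ↦ (q : ℂ)) (Algebra.coe_trace_int (x * y * b k))
  simp only [htrace]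
  rw [← sum_mul_conjForm φ b lam (x * y : K)]
  simp only [dotProduct, ← hεμ, conjBasis_apply]
  refine Finset.sum_congr rfl fun σ _ ↦ ?_
  change φ (ε σ * σ x) * (μ σ * φ (σ y)) = φ (σ (x * y)) * (φ (ε σ) * μ σ)
  simp only [map_mul]
  ring

lemma exists_expSystem (ha : ∀ k, Complex.exp (lam k) = φ (a k)) (hlam : LinearIndependent ℚ lam)
    (hb : b ≠ 0) {b₀ : 𝓞 K} (hrel : ∑ k, φ (b k) * lam k = φ b₀) :
    ∃ D : ExpSystem K (Free.ChooseBasisIndex ℤ (𝓞 K)) (Free.ChooseBasisIndex ℤ (𝓞 K)) Gal(K/ℚ),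
      LinearIndependent ℤ D.freq ∧ D.form ≠ 0 := by
  classical
  obtain ⟨ε, μ, hμ, hμ_one, hεμ⟩ :=
    exists_mul_eq_of_apply_eq (intEmbedding φ) (Λ := conjForm φ b lam) (g := 1) hrel
  obtain ⟨σ, hσ⟩ := exists_conjForm_ne_zero φ hlam hb
  have hεσ : ε σ ≠ 0 := by
    intro hzero
    exact hσ (by simp [← hεμ, hzero])
  choose x hx using fun ij : Free.ChooseBasisIndex ℤ (𝓞 K) × Free.ChooseBasisIndex ℤ (𝓞 K) ↦
    exists_apply_eq_exp_sum φ ha fun k ↦ Algebra.trace ℤ (𝓞 K)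
      (RingOfIntegers.basis K ij.1 * RingOfIntegers.basis K ij.2 * b k)
  obtain ⟨δ, hδ, hδx⟩ := exists_pos_forall_natCast_mul_mem_range x
  choose z hz using hδx
  let D : ExpSystem K _ _ Gal(K/ℚ) :=
    { φ := φ
      freq := conjFreq ε
      form := Pi.single 1 1
      point := conjBasis φ hμ
      den := δ
      den_pos := hδ
      formValue := RingOfIntegers.basis K
      intEmbedding_formValue := fun j ↦ by
        simp [dotProduct, Pi.single_apply, apply_ite, conjBasis_apply, hμ_one]
      expValue := fun i j ↦ z (i, j)
      intEmbedding_expValue := fun i j ↦ by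
        rw [conjFreq_dotProduct_conjBasis φ hμ hεμ, ← hx (i, j)]
        simp [hz] }
  exact ⟨D, linearIndependent_conjFreq hεσ, by simp [D]⟩

lemma eq_zero_of_sum_mul_log_eq_int (ha : ∀ k, Complex.exp (lam k) = φ (a k))
    (hlam : LinearIndependent ℚ lam) {b₀ : 𝓞 K} (hrel : ∑ k, φ (b k) * lam k = φ b₀) : b = 0 := by
  by_contra hb
  obtain ⟨D, hfreq, hform⟩ := exists_expSystem φ ha hlam hb hrel
  have hlt := D.card_lt_of_linearIndependent_freq hfreq hform
  rw [← finrank_eq_card_chooseBasisIndex, RingOfIntegers.rank, ← Nat.card_eq_fintype_card,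
    IsGalois.card_aut_eq_finrank] at hlt
  exact hlt.false

lemma eq_zero_of_sum_mul_log_eq (ha : ∀ k, Complex.exp (lam k) = φ (a k))
    (hlam : LinearIndependent ℚ lam) {c₀ : K} {c : ν → K} (hrel : ∑ k, φ (c k) * lam k = φ c₀) :
    c = 0 := by
  obtain ⟨δ, hδ, hδc⟩ := exists_pos_forall_natCast_mul_mem_range (fun o : Option ν ↦ o.elim c₀ c)
  choose b hb using hδc
  have hb_zero : (fun k ↦ b (some k)) = 0 := by
    refine eq_zero_of_sum_mul_log_eq_int φ ha hlam (b₀ := b none) ?_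
    simp only [hb, Option.elim, map_mul, mul_assoc, ← Finset.mul_sum, hrel]
  funext k
  have hδk : (δ : K) * c k = 0 := by
    simpa [congrFun hb_zero k] using (hb (some k)).symm
  exact (mul_eq_zero.1 hδk).resolve_left (by exact_mod_cast hδ.ne')

end

lemma exists_isGalois_intermediateField_forall_mem {E ι : Type*} [Field E] [IsAlgClosed E]
    [CharZero E] [Finite ι] {x : ι → E} (hx : ∀ i, IsAlgebraic ℚ (x i)) :
    ∃ K : IntermediateField ℚ E, NumberField K ∧ IsGalois ℚ K ∧ ∀ i, x i ∈ K := by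
  let K₀ := IntermediateField.adjoin ℚ (Set.range x)
  have : FiniteDimensional ℚ K₀ :=
    IntermediateField.finiteDimensional_adjoin (Set.forall_mem_range.2 fun i ↦ (hx i).isIntegral)
  have hclosure : IsNormalClosure ℚ K₀ (IntermediateField.normalClosure ℚ K₀ E) :=
    Algebra.IsAlgebraic.isNormalClosure_normalClosure fun _ ↦ IsAlgClosed.splits _
  exact ⟨IntermediateField.normalClosure ℚ K₀ E, { }, { to_normal := hclosure.normal }, fun i ↦
    IntermediateField.le_normalClosure K₀ (IntermediateField.subset_adjoin ℚ _ ⟨i, rfl⟩)⟩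

end Baker

/-- **Baker's theorem.** Let `λ₁, …, λ_n` be `ℚ`-linearly independent logarithms
of nonzero algebraic numbers `α₁, …, α_n` (i.e. `e^{λ_j} = α_j`). Then
`1, λ₁, …, λ_n` are linearly independent over the field of algebraic numbers:
if `β₀ + β₁λ₁ + ⋯ + β_nλ_n = 0` with all `β_j` algebraic, then all `β_j = 0`. -/
theorem baker_theorem
    (n : ℕ) (hn : 1 ≤ n)
    (α lam : Fin n → ℂ)
    (hα : ∀ j, α j ≠ 0) (halg : ∀ j, IsAlgebraic ℚ (α j))
    (hexp : ∀ j, Complex.exp (lam j) = α j)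
    (hind : LinearIndependent ℚ lam) :
    ∀ (β₀ : ℂ) (β : Fin n → ℂ),
      IsAlgebraic ℚ β₀ → (∀ j, IsAlgebraic ℚ (β j)) →
      β₀ + ∑ j, β j * lam j = 0 →
      β₀ = 0 ∧ ∀ j, β j = 0 := by
  intro β₀ β hβ₀ hβ hrel
  obtain ⟨K, _, _, hK⟩ := Baker.exists_isGalois_intermediateField_forall_mem
    (x := Sum.elim α (Option.elim · β₀ β))
    (Sum.forall.2 ⟨halg, Option.forall.2 ⟨hβ₀, hβ⟩⟩)
  let a (j : Fin n) : K := ⟨α j, hK (.inl j)⟩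
  let b₀ : K := ⟨β₀, hK (.inr none)⟩
  let b (j : Fin n) : K := ⟨β j, hK (.inr (some j))⟩
  have hb : b = 0 := by
    refine Baker.eq_zero_of_sum_mul_log_eq (algebraMap K ℂ) (a := a) (c₀ := -b₀) hexp hind ?_
    rw [map_neg]
    exact eq_neg_of_add_eq_zero_right hrel
  have hβ_zero (j : Fin n) : β j = 0 := congrArg Subtype.val (congrFun hb j)
  exact ⟨by simpa [hβ_zero] using hrel, hβ_zero⟩
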